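/- For every Dyck path λ of order n, the generating function of cover-inclusive Dyck tilings with lower path λ by the discrepancy statistic equals the generating function of the linear extensions of the chord poset of λ by the descent statistic: Σ_{T ∈ D(λ,*)} z^{dis(T)} = Σ_{σ ∈ L(P_λ)} z^{des(σ)}, as polynomials in z. -/

import Mathlib

open Finset

noncomputable section

/-- A Dyck path of order `n`: a word of `2n` steps (`true` = up-step `(+1,+1)`,
`false` = down-step `(+1,-1)`) from `(-n,0)` to `(n,0)` staying weakly above the x-axis. -/
structure DyckPath (n : ℕ) where
  step : Fin (2 * n) → Bool
  balanced : (Finset.univ.filter fun i => step i = true).card = n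
  nonneg : ∀ k : ℕ, k ≤ 2 * n →
    (Finset.univ.filter fun i : Fin (2 * n) => (i : ℕ) < k ∧ step i = false).card ≤
      (Finset.univ.filter fun i : Fin (2 * n) => (i : ℕ) < k ∧ step i = true).card

namespace DyckPath

/-- Height of the path above column `x` (columns run from `-n` to `n`). -/
def ht {n : ℕ} (P : DyckPath n) (x : ℤ) : ℤ :=
  ((Finset.univ.filter fun i : Fin (2 * n) => ((i : ℕ) : ℤ) < x + n ∧ P.step i = true).card : ℤ) -
    ((Finset.univ.filter fun i : Fin (2 * n) => ((i : ℕ) : ℤ) < x + n ∧ P.step i = false).card : ℤ)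

/-- Height of the path at lattice point number `k`, `0 ≤ k ≤ 2n`
(point `k` lies at column `k - n`). -/
def pt {n : ℕ} (P : DyckPath n) (k : ℕ) : ℤ := P.ht ((k : ℤ) - n)

end DyckPath

/-- `IsChord P p q`: the up-step at (0-indexed) position `p` matches the down-step at
position `q`, forming a chord of `P`. -/
def IsChord {n : ℕ} (P : DyckPath n) (p q : ℕ) : Prop :=
  p < q ∧ q < 2 * n ∧
    (∃ hp : p < 2 * n, P.step ⟨p, hp⟩ = true) ∧
    (∃ hq : q < 2 * n, P.step ⟨q, hq⟩ = false) ∧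
    P.pt (q + 1) = P.pt p ∧
    ∀ m : ℕ, p < m → m ≤ q → P.pt p < P.pt m

/-- A natural labeling of the chord poset of `P`: the chord labeled `i` has its up-step at
(0-indexed) position `l i` and matching down-step at position `r i`; distinct labels name
distinct chords; and if one chord is nested inside another it receives a larger label. -/
structure ChordLabeling {n : ℕ} (P : DyckPath n) where
  l : Fin n → ℕ
  r : Fin n → ℕ
  chord : ∀ i, IsChord P (l i) (r i)
  inj : Function.Injective l
  natural : ∀ i j : Fin n, l j < l i → r i < r j → j < i

/-- The length of the chord labeled `i`: the number of up steps of `P` between and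
including its two endpoints. -/
def chordLen {n : ℕ} {P : DyckPath n} (C : ChordLabeling P) (i : Fin n) : ℕ :=
  (Finset.univ.filter fun m : Fin (2 * n) =>
    C.l i ≤ (m : ℕ) ∧ (m : ℕ) ≤ C.r i ∧ P.step m = true).card

/-- The growth sequence `p_1, …, p_n` associated with a natural chord labeling:
`p i = #{j<i : l j < l i} + #{j<i : r j < l i}`. -/
def seqOf {n : ℕ} {P : DyckPath n} (C : ChordLabeling P) (i : Fin n) : ℕ :=
  (Finset.univ.filter fun j : Fin n => j < i ∧ C.l j < C.l i).card +
    (Finset.univ.filter fun j : Fin n => j < i ∧ C.r j < C.l i).card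

/-- `σ` is the standardization of the word `w` (with distinct letters). -/
def IsStandardization {n : ℕ} (w : Fin n → ℕ) (σ : Equiv.Perm (Fin n)) : Prop :=
  ∀ i j : Fin n, σ i < σ j ↔ w i < w j

/-- `σ ∈ 𝓛(P_λ)`: σ is `L₀ ∘ L⁻¹` for some natural labeling `L` of the chord poset,
equivalently the standardization of the word of left endpoints of a natural labeling. -/
def LinExt {n : ℕ} (P : DyckPath n) (σ : Equiv.Perm (Fin n)) : Prop :=
  ∃ C : ChordLabeling P, IsStandardization C.l σ

/-- Successor index in `Fin n` (used only under the guard `i+1 < n`). -/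
def nextIdx {n : ℕ} (i : Fin n) : Fin n := ⟨((i : ℕ) + 1) % n, Nat.mod_lt _ i.pos⟩

/-- Descent set of a word: positions `i` with `i+1 < n` and `w i > w (i+1)`. -/
def descentFinset {n : ℕ} (w : Fin n → ℕ) : Finset (Fin n) :=
  Finset.univ.filter fun i => (i : ℕ) + 1 < n ∧ w (nextIdx i) < w i

/-- Number of inversions of a word. -/
def wordInv {n : ℕ} (w : Fin n → ℕ) : ℕ :=
  (Finset.univ.filter fun p : Fin n × Fin n => p.1 < p.2 ∧ w p.2 < w p.1).card

/-- The word of values of a permutation. -/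
def permWord {n : ℕ} (σ : Equiv.Perm (Fin n)) : Fin n → ℕ := fun i => (σ i : ℕ)

/-- inv(σ). -/
def permInv {n : ℕ} (σ : Equiv.Perm (Fin n)) : ℕ := wordInv (permWord σ)

/-- des(σ). -/
def permDes {n : ℕ} (σ : Equiv.Perm (Fin n)) : ℕ := (descentFinset (permWord σ)).card

/-- `REM_i(w) = {k > i : w i > w k > w (i+1)}`, the right embraced numbers. -/
def remSet {n : ℕ} (w : Fin n → ℕ) (i : Fin n) : Finset (Fin n) :=
  Finset.univ.filter fun k => i < k ∧ w (nextIdx i) < w k ∧ w k < w i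

/-- desdif(σ) = Σ_{i ∈ DES σ} (σ i − σ (i+1)). -/
def desdif {n : ℕ} (σ : Equiv.Perm (Fin n)) : ℕ :=
  ∑ i ∈ descentFinset (permWord σ), (permWord σ i - permWord σ (nextIdx i))

/-- res(σ) = Σ_{i ∈ DES σ} #{k < i : σ i > σ k > σ (i+1)}. -/
def resStat {n : ℕ} (σ : Equiv.Perm (Fin n)) : ℕ :=
  ∑ i ∈ descentFinset (permWord σ),
    (Finset.univ.filter fun k : Fin n =>
      k < i ∧ permWord σ (nextIdx i) < permWord σ k ∧ permWord σ k < permWord σ i).card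

/-- The Mahonian statistic mad(σ) = desdif(σ) + res(σ). -/
def mad {n : ℕ} (σ : Equiv.Perm (Fin n)) : ℕ := desdif σ + resStat σ

/-- σ avoids the pattern 231. -/
def Avoids231 {n : ℕ} (σ : Equiv.Perm (Fin n)) : Prop :=
  ¬∃ i j k : Fin n, i < j ∧ j < k ∧ σ k < σ i ∧ σ i < σ j

/-- The boxes of the skew shape `lam/mu` (with `mu` weakly above `lam`), each box
recorded by its bottom corner (a lattice point `(x, z)` with `z ≡ x + n (mod 2)`). -/
def skewCells {n : ℕ} (lam mu : DyckPath n) : Finset (ℤ × ℤ) :=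
  ((Finset.Icc (-(n : ℤ)) n) ×ˢ (Finset.Icc (0 : ℤ) n)).filter fun c =>
    lam.ht c.1 ≤ c.2 ∧ c.2 + 2 ≤ mu.ht c.1 ∧ (c.2 - c.1 - n) % 2 = 0

/-- A Dyck tile, recorded by the set of bottom corners of its boxes: these form
a Dyck-path shape, i.e. a ±1-step lattice path whose two ends are lowest. -/
def IsDyckTile (t : Finset (ℤ × ℤ)) : Prop :=
  ∃ (a b : ℤ) (f : ℤ → ℤ), a ≤ b ∧
    (∀ x : ℤ, a ≤ x → x < b → f (x + 1) = f x + 1 ∨ f (x + 1) = f x - 1) ∧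
    f b = f a ∧ (∀ x : ℤ, a ≤ x → x ≤ b → f a ≤ f x) ∧
    t = (Finset.Icc a b).image fun x => (x, f x)

/-- A Dyck tiling of order `n`: a tiling of the skew shape between two Dyck paths of
order `n` by Dyck tiles. -/
structure DyckTiling (n : ℕ) where
  lower : DyckPath n
  upper : DyckPath n
  below : ∀ x : ℤ, lower.ht x ≤ upper.ht x
  tiles : Finset (Finset (ℤ × ℤ))
  isDyck : ∀ t ∈ tiles, IsDyckTile t
  disj : ∀ t ∈ tiles, ∀ u ∈ tiles, t ≠ u → Disjoint t u
  cover : tiles.biUnion id = skewCells lower upper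

namespace DyckTiling

/-- Number of boxes of the skew shape. -/
def area {n : ℕ} (T : DyckTiling n) : ℕ := (skewCells T.lower T.upper).card

/-- Number of tiles. -/
def numTiles {n : ℕ} (T : DyckTiling n) : ℕ := T.tiles.card

/-- art(T) = (area(T) + tiles(T)) / 2. -/
def art {n : ℕ} (T : DyckTiling n) : ℕ := (T.area + T.numTiles) / 2

/-- dis(T): the number of step positions where the lower path steps down while the
upper path steps up. -/
def dis {n : ℕ} (T : DyckTiling n) : ℕ :=
  (Finset.univ.filter fun i : Fin (2 * n) =>
    T.lower.step i = false ∧ T.upper.step i = true).card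

/-- Cover-inclusiveness: whenever a tile has a box strictly above a box of another tile,
its horizontal extent is contained in that of the other tile. -/
def CoverInclusive {n : ℕ} (T : DyckTiling n) : Prop :=
  ∀ t ∈ T.tiles, ∀ u ∈ T.tiles,
    (∃ p ∈ t, ∃ q ∈ u, (p : ℤ × ℤ).1 = (q : ℤ × ℤ).1 ∧ (q : ℤ × ℤ).2 < (p : ℤ × ℤ).2) →
    ∀ p ∈ t, ∃ y : ℤ, ((p : ℤ × ℤ).1, y) ∈ u

end DyckTiling

/-- Height function of the spread at column `s` of a Dyck path. -/
def spreadHt {n : ℕ} (P : DyckPath n) (s x : ℤ) : ℤ :=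
  if x < s then P.ht (x + 1) else if x = s then P.ht s + 1 else P.ht (x - 1)

/-- Spread of a tile at column `s`: points left of `s` move left, points right of `s`
move right, and a point at column `s` is duplicated upward. -/
def spreadTile (s : ℤ) (t : Finset (ℤ × ℤ)) : Finset (ℤ × ℤ) :=
  ((t.filter fun p => p.1 ≤ s).image fun p => (p.1 - 1, p.2)) ∪
    ((t.filter fun p => p.1 = s).image fun p => (p.1, p.2 + 1)) ∪
    ((t.filter fun p => s ≤ p.1).image fun p => (p.1 + 1, p.2))

/-- Spread of a set of tiles at column `s`. -/
def spreadTiles (s : ℤ) (ts : Finset (Finset (ℤ × ℤ))) : Finset (Finset (ℤ × ℤ)) :=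
  ts.image (spreadTile s)

/-- Column `c` is eligible for a tiling with upper-boundary height function `h` and
tile set `ts`: the upper boundary has an up step ending at column `c`, and its point at
column `c` is not the top corner of a one-box tile. -/
def EligibleCol (h : ℤ → ℤ) (ts : Finset (Finset (ℤ × ℤ))) (c : ℤ) : Prop :=
  h c = h (c - 1) + 1 ∧ ({(c, h c - 2)} : Finset (ℤ × ℤ)) ∉ ts

/-- `T'` is the result of the strip-grow map applied to `(T, s)`: spread `T` at `s` and
add a one-box tile on each up step of the (spread) upper boundary starting at a column
`≥ s` (i.e. strictly to the right of column `s`). -/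
def StripGrowRel {n : ℕ} (T : DyckTiling n) (s : ℤ) (T' : DyckTiling (n + 1)) : Prop :=
  (∀ x : ℤ, T'.lower.ht x = spreadHt T.lower s x) ∧
  (∀ x : ℤ, T'.upper.ht x =
    if s ≤ x ∧ spreadHt T.upper s (x + 1) = spreadHt T.upper s x + 1 then
      spreadHt T.upper s x + 2
    else spreadHt T.upper s x) ∧
  T'.tiles = spreadTiles s T.tiles ∪
    ((Finset.Icc s (n : ℤ)).filter fun x =>
        spreadHt T.upper s (x + 1) = spreadHt T.upper s x + 1).image
      (fun x => ({(x, spreadHt T.upper s x)} : Finset (ℤ × ℤ)))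

/-- `T'` is the result of the ribbon-grow map applied to `(T, s)`: spread `T` at `s`,
and if the special column `Q` of the spread tiling is strictly right of `s`, add a
ribbon of one-box tiles at all columns strictly between `s` and `Q`. -/
def RibbonGrowRel {n : ℕ} (T : DyckTiling n) (s : ℤ) (T' : DyckTiling (n + 1)) : Prop :=
  (∀ x : ℤ, T'.lower.ht x = spreadHt T.lower s x) ∧
  ∃ Q : ℤ,
    EligibleCol (spreadHt T.upper s) (spreadTiles s T.tiles) Q ∧
    (∀ c : ℤ, EligibleCol (spreadHt T.upper s) (spreadTiles s T.tiles) c → c ≤ Q) ∧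
    (∀ x : ℤ, T'.upper.ht x =
      if s < x ∧ x < Q then spreadHt T.upper s x + 2 else spreadHt T.upper s x) ∧
    T'.tiles = spreadTiles s T.tiles ∪
      (Finset.Ioo s Q).image (fun x => ({(x, spreadHt T.upper s x)} : Finset (ℤ × ℤ)))

/-- `s` is the special column of `T`: its rightmost eligible column. -/
def SpecialCol {n : ℕ} (T : DyckTiling n) (s : ℤ) : Prop :=
  EligibleCol T.upper.ht T.tiles s ∧ ∀ c : ℤ, EligibleCol T.upper.ht T.tiles c → c ≤ s

/-- In the strip-shrink map applied to `T'` with special column `s`, a one-box tile is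
removed at column `x`: `x` is right of `s` and there is a one-box tile there that is
part of an up step of the upper boundary. -/
def StripRemovedAt {n : ℕ} (T' : DyckTiling n) (s x : ℤ) : Prop :=
  s < x ∧ T'.upper.ht x = T'.upper.ht (x - 1) + 1 ∧
    ({(x, T'.upper.ht x - 2)} : Finset (ℤ × ℤ)) ∈ T'.tiles

instance {n : ℕ} (T' : DyckTiling n) (s x : ℤ) : Decidable (StripRemovedAt T' s x) := by
  unfold StripRemovedAt; infer_instance

/-- `(T, s)` is the result of the strip-shrink map applied to `T'`: `s` is the special
column of `T'`; all one-box tiles right of `s` lying on up steps of the upper boundary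
are removed; and the result is the spread of `T` at `s`. -/
def StripShrinkRel {n : ℕ} (T' : DyckTiling (n + 1)) (T : DyckTiling n) (s : ℤ) : Prop :=
  SpecialCol T' s ∧
  (∀ x : ℤ, spreadHt T.lower s x = T'.lower.ht x) ∧
  (∀ x : ℤ, spreadHt T.upper s x =
    if StripRemovedAt T' s x then T'.upper.ht x - 2 else T'.upper.ht x) ∧
  spreadTiles s T.tiles =
    T'.tiles \ (((Finset.Ioc s ((n : ℤ) + 1)).filter fun x => StripRemovedAt T' s x).image
      fun x => ({(x, T'.upper.ht x - 2)} : Finset (ℤ × ℤ)))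

/-- `(T, s)` is the result of the ribbon-shrink map applied to `T'`: `s` is the special
column of `T'`; the maximal run of topmost one-box tiles in columns `s+1, s+2, …` is
removed; and the result is the spread of `T` at `s`. -/
def RibbonShrinkRel {n : ℕ} (T' : DyckTiling (n + 1)) (T : DyckTiling n) (s : ℤ) : Prop :=
  SpecialCol T' s ∧
  ∃ r : ℤ, s < r ∧
    (∀ x : ℤ, s < x → x < r → ({(x, T'.upper.ht x - 2)} : Finset (ℤ × ℤ)) ∈ T'.tiles) ∧
    ({(r, T'.upper.ht r - 2)} : Finset (ℤ × ℤ)) ∉ T'.tiles ∧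
    (∀ x : ℤ, spreadHt T.lower s x = T'.lower.ht x) ∧
    (∀ x : ℤ, spreadHt T.upper s x =
      if s < x ∧ x < r then T'.upper.ht x - 2 else T'.upper.ht x) ∧
    spreadTiles s T.tiles =
      T'.tiles \ ((Finset.Ioo s r).image fun x => ({(x, T'.upper.ht x - 2)} : Finset (ℤ × ℤ)))

/-- `IsDTS n p T`: `T` is the Dyck tiling `DTS(p_1, …, p_n)` (indices 0-based, so the
growth column for step `i` is `p i - i`). -/
inductive IsDTS : (n : ℕ) → (Fin n → ℕ) → DyckTiling n → Prop where
  | nil (p : Fin 0 → ℕ) (T : DyckTiling 0) : IsDTS 0 p T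
  | cons (n : ℕ) (p : Fin (n + 1) → ℕ) (T : DyckTiling n) (T' : DyckTiling (n + 1)) :
      IsDTS n (fun i => p i.castSucc) T →
      StripGrowRel T ((p (Fin.last n) : ℤ) - n) T' → IsDTS (n + 1) p T'

/-- `IsDTR n p T`: `T` is the Dyck tiling `DTR(p_1, …, p_n)`. -/
inductive IsDTR : (n : ℕ) → (Fin n → ℕ) → DyckTiling n → Prop where
  | nil (p : Fin 0 → ℕ) (T : DyckTiling 0) : IsDTR 0 p T
  | cons (n : ℕ) (p : Fin (n + 1) → ℕ) (T : DyckTiling n) (T' : DyckTiling (n + 1)) :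
      IsDTR n (fun i => p i.castSucc) T →
      RibbonGrowRel T ((p (Fin.last n) : ℤ) - n) T' → IsDTR (n + 1) p T'

/-- `T = DTS(λ, σ)`. -/
def IsDTSof {n : ℕ} (lam : DyckPath n) (σ : Equiv.Perm (Fin n)) (T : DyckTiling n) : Prop :=
  ∃ C : ChordLabeling lam, IsStandardization C.l σ ∧ IsDTS n (seqOf C) T

/-- `T = DTR(λ, σ)`. -/
def IsDTRof {n : ℕ} (lam : DyckPath n) (σ : Equiv.Perm (Fin n)) (T : DyckTiling n) : Prop :=
  ∃ C : ChordLabeling lam, IsStandardization C.l σ ∧ IsDTR n (seqOf C) T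

/-- Increment `a` if it exceeds `p`. -/
def bump (p a : ℕ) : ℕ := if p < a then a + 1 else a

/-- The perfect matching `match(p_1, …, p_n)` of `{1, …, 2n}`. -/
def matchSeq : (n : ℕ) → (Fin n → ℕ) → Finset (ℕ × ℕ)
  | 0, _ => ∅
  | n + 1, p =>
    ((matchSeq n fun i => p i.castSucc).image fun q =>
      (bump (p (Fin.last n)) q.1, bump (p (Fin.last n)) q.2)) ∪
      {(p (Fin.last n) + 1, 2 * (n + 1))}

/-- The number of nestings of a matching: pairs `(a,b)`, `(c,d)` with `c < a < b < d`. -/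
def nestings (M : Finset (ℕ × ℕ)) : ℕ :=
  ((M ×ˢ M).filter fun q => q.2.1 < q.1.1 ∧ q.1.1 < q.1.2 ∧ q.1.2 < q.2.2).card

/-- `w` is the min-word of `M`: the list of the smaller elements of the pairs of `M`,
sorted by the larger elements. -/
def IsMinWord (n : ℕ) (M : Finset (ℕ × ℕ)) (w : Fin n → ℕ) : Prop :=
  ∃ b : Fin n → ℕ, StrictMono b ∧ (∀ i, w i < b i) ∧
    M = Finset.univ.image fun i => (w i, b i)

/-- The number of tiles of `T` containing boxes over both endpoint columns of the
chord with endpoints at step positions `p < q`. -/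
def chordTileCount {n : ℕ} (T : DyckTiling n) (p q : ℕ) : ℕ :=
  (T.tiles.filter fun t =>
    (∃ c ∈ t, (c : ℤ × ℤ).1 = (p : ℤ) + 1 - n) ∧ (∃ c ∈ t, (c : ℤ × ℤ).1 = (q : ℤ) - n)).card

/-- A Dyck tableau of order `n` over the zigzag path `Z` of order `n+1`: a skew shape
`Z/μ` with `n` dots, one in each column of the skew shape through a valley of `Z`. -/
structure DyckTableau (n : ℕ) (Z : DyckPath (n + 1)) where
  upper : DyckPath (n + 1)
  below : ∀ x : ℤ, Z.ht x ≤ upper.ht x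
  dots : Finset (ℤ × ℤ)
  sub : dots ⊆ skewCells Z upper
  card_dots : dots.card = n
  valley : ∀ x : ℤ, Z.ht (x - 1) = Z.ht x + 1 → Z.ht (x + 1) = Z.ht x + 1 →
    (dots.filter fun c => c.1 = x).card = 1

/-- The `q`-integer `[m]_q = 1 + q + ⋯ + q^(m-1)` as a polynomial. -/
def qint (m : ℕ) : Polynomial ℤ := ∑ i ∈ Finset.range m, Polynomial.X ^ i

/-- The `q`-factorial `[n]_q!`. -/
def qfact (n : ℕ) : Polynomial ℤ := ∏ i ∈ Finset.range n, qint (i + 1)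

/-! A cover-inclusive tiling of `λ/μ` is determined by two functions on the columns and steps of
`λ`: the column heights `c` (the number of boxes between `λ` and `μ`) and the join counts `b` (the
number of levels at which the columns on both sides of a step lie in a common tile). All its tiles
are vertical translates of pieces of `λ`, so `b` is an order-preserving labelling of the chord
forest of `λ`, bounded by `c`; on an up step of `λ` the height `c` is constant or drops by one, on
a down step it is constant or rises by one, and `dis` is the total drop of `c`.

Summing `z ^ dis` over these data is therefore the action of a transfer operator built recursively
along the chord forest. The operators of all forests share the eigenvectors
`(1 + t) ^ m / (1 + z t) ^ (m + 1)`; for a forest with `n` nodes the eigenvalue is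
`(1 - z) ^ n Ω(m)`, with `Ω` the order polynomial. Expanding the constant series `1` in these
eigenvectors turns `∑ z ^ dis` into `(1 - z) ^ (n + 1) ∑ Ω(m) z ^ m`, which is `∑ z ^ des` over the
linear extensions by Stanley's theory of `P`-partitions. -/

/-! ### Transfer operators of plane forests -/

/-- Plane forests: `node a r` is a tree whose root has the forest `a` of subtrees, followed by
the forest `r`. The chord poset of a Dyck path is such a forest. -/
inductive PlaneForest where
  | nil : PlaneForest
  | node : PlaneForest → PlaneForest → PlaneForest

namespace PlaneForest

/-- Number of vertices. -/
def size : PlaneForest → ℕ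
  | nil => 0
  | node a r => a.size + 1 + r.size

/-- The order polynomial of a forest: the number of its labellings by `{0, …, m}` that increase
weakly from each root inwards. -/
def orderPoly : PlaneForest → ℕ → ℕ
  | nil, _ => 1
  | node a r, m => (∑ k ∈ range (m + 1), a.orderPoly k) * r.orderPoly m

section Transfer

open PowerSeries hiding mk

variable {R : Type*} [CommRing R]

/-- Division of power series by `X`, dropping the constant term. -/
def divX : R⟦X⟧ →ₗ[R] R⟦X⟧ where
  toFun φ := PowerSeries.mk fun i => coeff (i + 1) φ
  map_add' φ ψ := by ext; simp
  map_smul' c φ := by ext; simp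

@[simp]
theorem coeff_divX (i : ℕ) (φ : R⟦X⟧) : coeff i (divX φ) = coeff (i + 1) φ := by
  simp [divX]

theorem X_mul_divX (φ : R⟦X⟧) : X * divX φ = φ - C (constantCoeff φ) :=
  eq_sub_of_add_eq (eq_X_mul_shift_add_const φ).symm

theorem coeff_iterate_divX (k i : ℕ) (φ : R⟦X⟧) : coeff i (divX^[k] φ) = coeff (i + k) φ := by
  induction k generalizing φ with
  | zero => rfl
  | succ k ih => rw [Function.iterate_succ_apply, ih, coeff_divX, add_assoc]

/-- The sum of the conjugates `X ^ k * A ∘ divX ^ k` of an operator `A` on power series. When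
power series are read as functions of a height, this lets `A` act above every possible floor. -/
def floorSum (A : R⟦X⟧ →ₗ[R] R⟦X⟧) : R⟦X⟧ →ₗ[R] R⟦X⟧ where
  toFun φ := PowerSeries.mk fun j => ∑ k ∈ range (j + 1), coeff (j - k) (A (divX^[k] φ))
  map_add' φ ψ := by ext; simp [iterate_map_add, sum_add_distrib]
  map_smul' c φ := by
    have h (k : ℕ) : divX^[k] (c • φ) = c • divX^[k] φ := by ext; simp [coeff_iterate_divX]
    ext; simp [h, mul_sum]

theorem coeff_floorSum (A : R⟦X⟧ →ₗ[R] R⟦X⟧) (φ : R⟦X⟧) (j : ℕ) :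
    coeff j (floorSum A φ) = ∑ k ∈ range (j + 1), coeff (j - k) (A (divX^[k] φ)) := by
  simp [floorSum]

theorem floorSum_eq_add_X_mul (A : R⟦X⟧ →ₗ[R] R⟦X⟧) (φ : R⟦X⟧) :
    floorSum A φ = A φ + X * floorSum A (divX φ) := by
  ext j
  cases j with
  | zero => simp [coeff_floorSum]
  | succ j =>
    rw [map_add, coeff_succ_X_mul, coeff_floorSum, coeff_floorSum, sum_range_succ', add_comm]
    simp

/-- The transfer operator of a forest. A power series stands for a function of the height of the
upper path; the coefficient `i` of `transfer z t φ` sums `z ^ descent * φ (final height)` over the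
configurations above the forest that start at height `i`. -/
def transfer (z : R) : PlaneForest → R⟦X⟧ →ₗ[R] R⟦X⟧
  | nil => LinearMap.id
  | node a r => LinearMap.mulLeft R (1 + C z * X) ∘ₗ floorSum (transfer z a) ∘ₗ
      (LinearMap.id + divX) ∘ₗ transfer z r

theorem transfer_node_apply (z : R) (a r : PlaneForest) (φ : R⟦X⟧) :
    transfer z (node a r) φ = (1 + C z * X) *
      floorSum (transfer z a) (transfer z r φ + divX (transfer z r φ)) := rfl

/-- The common eigenvectors `(1 + X) ^ m / (1 + z X) ^ (m + 1)` of the transfer operators. -/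
def eigenSeries (z : R) (m : ℕ) : R⟦X⟧ :=
  ((1 + X) * PowerSeries.mk fun i => (-z) ^ i) ^ m * PowerSeries.mk fun i => (-z) ^ i

theorem one_add_mul_eigenSeries_zero (z : R) : (1 + C z * X) * eigenSeries z 0 = 1 := by
  ext i
  cases i <;>
    simp [eigenSeries, add_mul, mul_assoc, coeff_succ_X_mul, coeff_one, pow_succ']

theorem one_add_mul_eigenSeries_succ (z : R) (m : ℕ) :
    (1 + C z * X) * eigenSeries z (m + 1) = (1 + X) * eigenSeries z m := by
  have h := one_add_mul_eigenSeries_zero z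
  simp only [eigenSeries, pow_zero, one_mul] at h
  simp only [eigenSeries, pow_succ]
  linear_combination ((1 + X) * (PowerSeries.mk fun i => (-z) ^ i)) ^ m * (1 + X) *
    (PowerSeries.mk fun i => (-z) ^ i) * h

theorem constantCoeff_eigenSeries (z : R) (m : ℕ) : constantCoeff (eigenSeries z m) = 1 := by
  simp [eigenSeries]

theorem one_add_C_mul_X_mul_cancel {z : R} {φ ψ : R⟦X⟧}
    (h : (1 + C z * X) * φ = (1 + C z * X) * ψ) : φ = ψ :=
  (IsUnit.of_mul_eq_one _ (one_add_mul_eigenSeries_zero z)).mul_left_cancel h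

theorem one_sub_smul_X_mul_sum_eigenSeries (z : R) (m : ℕ) :
    (1 - z) • (X * ∑ k ∈ range m, eigenSeries z k) = (1 + C z * X) * eigenSeries z m - 1 := by
  induction m with
  | zero => simp [one_add_mul_eigenSeries_zero]
  | succ m ih =>
    rw [sum_range_succ, mul_add, smul_add, ih, one_add_mul_eigenSeries_succ, smul_eq_C_mul,
      map_sub, map_one]
    ring

theorem eigenSeries_add_divX (z : R) (m : ℕ) :
    eigenSeries z m + divX (eigenSeries z m) = (1 - z) • ∑ k ∈ range (m + 1), eigenSeries z k := by
  refine X_mul_cancel ?_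
  rw [mul_smul_comm, one_sub_smul_X_mul_sum_eigenSeries, mul_add, X_mul_divX,
    constantCoeff_eigenSeries, one_add_mul_eigenSeries_succ, map_one]
  ring

theorem one_add_X_mul_floorSum_eigenSeries {z w : R} {A : R⟦X⟧ →ₗ[R] R⟦X⟧} {m : ℕ}
    (hA : A (eigenSeries z m) = w • eigenSeries z m) :
    (1 + X) * floorSum A (eigenSeries z m) = w • eigenSeries z m +
      (1 - z) • (X * floorSum A (∑ k ∈ range (m + 1), eigenSeries z k)) := by
  have h := floorSum_eq_add_X_mul A (eigenSeries z m)
  rw [hA, eq_sub_of_add_eq' (eigenSeries_add_divX z m), map_sub, map_smul, mul_sub,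
    mul_smul_comm] at h
  linear_combination h

theorem one_add_mul_floorSum_sum_eigenSeries {z : R} {w : ℕ → R} {A : R⟦X⟧ →ₗ[R] R⟦X⟧}
    (hA : ∀ m, A (eigenSeries z m) = w m • eigenSeries z m) (m : ℕ) :
    (1 + C z * X) * floorSum A (∑ k ∈ range (m + 1), eigenSeries z k) =
      (∑ k ∈ range (m + 1), w k) • eigenSeries z m := by
  induction m with
  | zero =>
    have h := one_add_X_mul_floorSum_eigenSeries (hA 0)
    simp only [zero_add, sum_range_one, smul_eq_C_mul, map_sub, map_one] at h ⊢
    linear_combination h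
  | succ m ih =>
    have hlow : (1 + X) * floorSum A (∑ k ∈ range (m + 1), eigenSeries z k) =
        (∑ k ∈ range (m + 1), w k) • eigenSeries z (m + 1) := by
      refine one_add_C_mul_X_mul_cancel (z := z) ?_
      rw [mul_left_comm, ih, mul_smul_comm, mul_smul_comm, one_add_mul_eigenSeries_succ]
    have h := one_add_X_mul_floorSum_eigenSeries (hA (m + 1))
    rw [sum_range_succ _ (m + 1), map_add] at h ⊢
    rw [sum_range_succ w, add_smul, ← hlow]
    simp only [smul_eq_C_mul, map_sub, map_one] at h ⊢
    linear_combination h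

theorem transfer_eigenSeries (z : R) (t : PlaneForest) (m : ℕ) :
    transfer z t (eigenSeries z m) =
      ((1 - z) ^ t.size * (t.orderPoly m : R)) • eigenSeries z m := by
  induction t generalizing m with
  | nil => simp [transfer, size, orderPoly]
  | node a r iha ihr =>
    rw [transfer_node_apply, ihr, map_smul, ← smul_add, eigenSeries_add_divX, map_smul, map_smul,
      mul_smul_comm, mul_smul_comm, one_add_mul_floorSum_sum_eigenSeries iha, smul_smul, smul_smul,
      size, orderPoly, ← mul_sum]
    push_cast
    ring_nf

theorem one_eq_sum_eigenSeries_add (z : R) (M : ℕ) :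
    (1 : R⟦X⟧) = (1 - z) • ∑ m ∈ range M, z ^ m • eigenSeries z m +
      z ^ M • ((1 + C z * X) * eigenSeries z M) := by
  induction M with
  | zero => simp [one_add_mul_eigenSeries_zero]
  | succ M ih =>
    conv_lhs => rw [ih]
    rw [sum_range_succ, one_add_mul_eigenSeries_succ]
    simp only [smul_eq_C_mul, map_sub, map_one, map_pow]
    ring

theorem exists_constantCoeff_transfer_one (z : R) (t : PlaneForest) (M : ℕ) :
    ∃ y : R, constantCoeff (transfer z t 1) =
      (1 - z) ^ (t.size + 1) * ∑ m ∈ range M, z ^ m * (t.orderPoly m : R) + z ^ M * y := by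
  refine ⟨constantCoeff (transfer z t ((1 + C z * X) * eigenSeries z M)), ?_⟩
  conv_lhs => rw [one_eq_sum_eigenSeries_add z M]
  simp only [map_add, map_smul, map_sum, transfer_eigenSeries, constantCoeff_smul,
    constantCoeff_eigenSeries, smul_eq_mul, mul_one]
  congr 1
  simp only [mul_sum]
  exact sum_congr rfl fun k _ => by ring

theorem X_pow_dvd_mk_sub_sum (a : ℕ → R) (M : ℕ) :
    X ^ M ∣ PowerSeries.mk a - ∑ m ∈ range M, X ^ m * C (a m) := by
  rw [X_pow_dvd_iff]
  intro i hi
  rw [map_sub, map_sum, PowerSeries.coeff_mk, sub_eq_zero,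
    sum_eq_single_of_mem i (mem_range.mpr hi)]
  · rw [coeff_mul_C, coeff_X_pow_self, one_mul]
  · intro m _ hm
    rw [coeff_mul_C, coeff_X_pow, if_neg hm.symm, zero_mul]

/-- Taking `z = X` makes the remainder of the eigenvector expansion vanish `X`-adically. -/
theorem constantCoeff_transfer_X_one (t : PlaneForest) :
    constantCoeff (transfer (X : R⟦X⟧) t 1) =
      (1 - X) ^ (t.size + 1) * PowerSeries.mk fun m => (t.orderPoly m : R) := by
  ext i
  obtain ⟨y, hy⟩ := exists_constantCoeff_transfer_one (X : R⟦X⟧) t (i + 1)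
  obtain ⟨d, hd⟩ := X_pow_dvd_mk_sub_sum (fun m => (t.orderPoly m : R)) (i + 1)
  have hdvd : X ^ (i + 1) ∣ constantCoeff (transfer (X : R⟦X⟧) t 1) -
      (1 - X) ^ (t.size + 1) * PowerSeries.mk fun m => (t.orderPoly m : R) := by
    refine ⟨y - (1 - X) ^ (t.size + 1) * d, ?_⟩
    simp only [map_natCast] at hd
    linear_combination hy - (1 - X) ^ (t.size + 1) * hd
  exact sub_eq_zero.mp ((map_sub _ _ _).symm.trans (X_pow_dvd_iff.mp hdvd i i.lt_succ_self))

end Transfer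

end PlaneForest

/-! ### Descents and P-partitions -/

section PPartition

/-- Sequences `g` with `e 0 ≤ g 0`, `g i + e (i + 1) ≤ g (i + 1)` and last entry at most `m`. -/
def gapSeqs : (n : ℕ) → (Fin n → ℕ) → ℕ → Finset (Fin n → ℕ)
  | 0, _, _ => {Fin.elim0}
  | n + 1, e, m => (range (m + 1 - e (Fin.last n))).biUnion fun u =>
      (gapSeqs n (Fin.init e) u).image fun g => Fin.snoc g (u + e (Fin.last n))

theorem mem_gapSeqs_succ {n : ℕ} {e g : Fin (n + 1) → ℕ} {m : ℕ} :
    g ∈ gapSeqs (n + 1) e m ↔ (e (Fin.last n) ≤ g (Fin.last n) ∧ g (Fin.last n) ≤ m) ∧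
      Fin.init g ∈ gapSeqs n (Fin.init e) (g (Fin.last n) - e (Fin.last n)) := by
  simp only [gapSeqs, mem_biUnion, mem_image, mem_range]
  constructor
  · rintro ⟨u, hu, g', hg', rfl⟩
    rw [Fin.init_snoc, Fin.snoc_last, Nat.add_sub_cancel]
    exact ⟨by omega, hg'⟩
  · rintro ⟨hlast, hinit⟩
    refine ⟨g (Fin.last n) - e (Fin.last n), by omega, _, hinit, ?_⟩
    rw [Nat.sub_add_cancel hlast.1]
    exact Fin.snoc_init_self g

theorem mem_gapSeqs {n : ℕ} {e g : Fin (n + 1) → ℕ} {m : ℕ} :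
    g ∈ gapSeqs (n + 1) e m ↔
      e 0 ≤ g 0 ∧ (∀ i : Fin n, g i.castSucc + e i.succ ≤ g i.succ) ∧ g (Fin.last n) ≤ m := by
  induction n generalizing m with
  | zero =>
    rw [mem_gapSeqs_succ]
    simp [gapSeqs, Subsingleton.elim _ Fin.elim0]
  | succ n ih =>
    rw [mem_gapSeqs_succ, ih, Fin.forall_fin_succ']
    simp only [Fin.init, Fin.castSucc_zero, Fin.succ_last, Fin.succ_castSucc, Nat.succ_eq_add_one]
    constructor
    · rintro ⟨hlast, hzero, hgap, hle⟩
      exact ⟨hzero, ⟨hgap, by omega⟩, hlast.2⟩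
    · rintro ⟨hzero, ⟨hgap, hle⟩, hlast⟩
      exact ⟨by omega, hzero, hgap, by omega⟩

theorem card_gapSeqs_succ {n : ℕ} (e : Fin (n + 1) → ℕ) (m : ℕ) :
    (gapSeqs (n + 1) e m).card =
      ∑ u ∈ range (m + 1 - e (Fin.last n)), (gapSeqs n (Fin.init e) u).card := by
  rw [gapSeqs, card_biUnion]
  · refine sum_congr rfl fun u _ => card_image_of_injective _ fun g g' h => ?_
    simpa using congrArg Fin.init h
  · intro u _ v _ huv
    rw [Function.onFun, disjoint_left]
    simp only [mem_image]
    rintro _ ⟨g, _, rfl⟩ ⟨g', _, h⟩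
    exact huv (by simpa using (congrFun h (Fin.last n)).symm)

open PowerSeries hiding mk

theorem one_sub_X_mul_mk_sum_range {R : Type*} [CommRing R] (f : ℕ → R) (k : ℕ) :
    (1 - X) * PowerSeries.mk (fun m => ∑ u ∈ range (m + 1 - k), f u) =
      X ^ k * PowerSeries.mk f := by
  ext m
  rw [sub_mul, one_mul, map_sub, coeff_X_pow_mul', coeff_mk]
  cases m with
  | zero => cases k <;> simp
  | succ m =>
    rw [coeff_succ_X_mul, coeff_mk]
    split_ifs with hk
    · rw [Nat.sub_add_comm hk, sum_range_succ]
      simp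
    · rw [Nat.sub_eq_zero_of_le (by omega), Nat.sub_eq_zero_of_le (by omega), sub_self]

theorem one_sub_X_pow_mul_mk_card_gapSeqs {R : Type*} [CommRing R] {n : ℕ} (e : Fin n → ℕ) :
    (1 - X) ^ (n + 1) * PowerSeries.mk (fun m => ((gapSeqs n e m).card : R)) = X ^ ∑ i, e i := by
  induction n with
  | zero =>
    simp only [gapSeqs, card_singleton, Nat.cast_one, univ_eq_empty, sum_empty, pow_zero, zero_add,
      pow_one]
    exact (mul_comm _ _).trans (PowerSeries.mk_one_mul_one_sub_eq_one R)
  | succ n ih =>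
    simp only [card_gapSeqs_succ, Nat.cast_sum]
    rw [pow_succ, mul_assoc, one_sub_X_mul_mk_sum_range, mul_left_comm, ih, ← pow_add,
      Fin.sum_univ_castSucc, add_comm]
    rfl

/-- The indicator sequence of the descents of `σ`, shifted by one position. -/
def descentGaps : {n : ℕ} → Equiv.Perm (Fin n) → Fin n → ℕ
  | 0, _ => Fin.elim0
  | n + 1, σ => Fin.cons 0 fun i : Fin n => if σ i.succ < σ i.castSucc then 1 else 0

theorem nextIdx_castSucc {n : ℕ} (i : Fin n) : nextIdx i.castSucc = i.succ :=
  Fin.ext (Nat.mod_eq_of_lt (Nat.succ_lt_succ i.2))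

theorem sum_descentGaps {n : ℕ} (σ : Equiv.Perm (Fin n)) : ∑ i, descentGaps σ i = permDes σ := by
  cases n with
  | zero => simp [permDes, descentFinset]
  | succ n =>
    simp only [descentGaps, permDes, descentFinset, card_filter]
    rw [Fin.sum_univ_succ, Fin.sum_univ_castSucc, Fin.cons_zero, zero_add]
    simp [permWord, nextIdx_castSucc]

theorem eq_sort_iff_forall_lt_succ {n : ℕ} {σ : Equiv.Perm (Fin (n + 1))} {f : Fin (n + 1) → ℕ} :
    σ = Tuple.sort f ↔ ∀ i : Fin n, f (σ i.castSucc) < f (σ i.succ) ∨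
      f (σ i.castSucc) = f (σ i.succ) ∧ σ i.castSucc < σ i.succ := by
  rw [Tuple.eq_sort_iff', Fin.strictMono_iff_lt_succ]
  exact forall_congr' fun i => Prod.Lex.toLex_lt_toLex

theorem sort_eq_iff_mem_gapSeqs {n : ℕ} {σ : Equiv.Perm (Fin n)} {f : Fin n → ℕ} {m : ℕ} :
    (Tuple.sort f = σ ∧ ∀ i, f i ≤ m) ↔ f ∘ σ ∈ gapSeqs n (descentGaps σ) m := by
  cases n with
  | zero => simp [gapSeqs, Subsingleton.elim _ Fin.elim0, Subsingleton.elim _ σ]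
  | succ n =>
    have hgap (i : Fin n) : (f (σ i.castSucc) < f (σ i.succ) ∨
        f (σ i.castSucc) = f (σ i.succ) ∧ σ i.castSucc < σ i.succ) ↔
        f (σ i.castSucc) + descentGaps σ i.succ ≤ f (σ i.succ) := by
      have hne : σ i.castSucc ≠ σ i.succ := σ.injective.ne Fin.castSucc_lt_succ.ne
      simp only [descentGaps, Fin.cons_succ]
      split_ifs with h <;> omega
    rw [mem_gapSeqs, eq_comm, eq_sort_iff_forall_lt_succ, forall_congr' hgap]
    simp only [Function.comp_apply, descentGaps, Fin.cons_zero, zero_le, true_and]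
    refine and_congr_right fun hmono => ⟨fun hle => hle _, fun hle i => ?_⟩
    have h : Monotone (f ∘ σ) :=
      Fin.monotone_iff_le_succ.mpr fun i => (Nat.le_add_right _ _).trans (hmono i)
    simpa using (h (Fin.le_last (σ.symm i))).trans hle

theorem card_filter_sort_eq {n : ℕ} (σ : Equiv.Perm (Fin n)) (m : ℕ) :
    ((Fintype.piFinset fun _ : Fin n => range (m + 1)).filter fun f => Tuple.sort f = σ).card =
      (gapSeqs n (descentGaps σ) m).card := by
  refine card_equiv (σ.symm.arrowCongr (Equiv.refl ℕ)) fun f => ?_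
  have hcomp : σ.symm.arrowCongr (Equiv.refl ℕ) f = f ∘ σ := rfl
  rw [hcomp, ← sort_eq_iff_mem_gapSeqs, mem_filter, and_comm]
  simp only [Fintype.mem_piFinset, mem_range, Nat.lt_succ_iff]

section Monotone

variable {n : ℕ} {r : Fin n → Fin n → Prop}

theorem sort_symm_lt_of_forall_le (hr : ∀ i j, r i j → i < j) {f : Fin n → ℕ}
    (hf : ∀ i j, r i j → f i ≤ f j) {i j : Fin n} (hij : r i j) :
    (Tuple.sort f).symm i < (Tuple.sort f).symm j := by
  obtain ⟨hmono, hties⟩ := Tuple.eq_sort_iff.mp (rfl : Tuple.sort f = Tuple.sort f)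
  by_contra! hle
  have hlt := hle.lt_of_ne ((Tuple.sort f).symm.injective.ne (hr i j hij).ne')
  have hji : f j ≤ f i := by simpa using hmono hle
  have := hties _ _ hlt (by simpa using hji.antisymm (hf i j hij))
  simp only [Equiv.apply_symm_apply] at this
  exact this.asymm (hr i j hij)

theorem forall_le_of_sort_symm_lt {f : Fin n → ℕ}
    (hf : ∀ i j, r i j → (Tuple.sort f).symm i < (Tuple.sort f).symm j) {i j : Fin n}
    (hij : r i j) : f i ≤ f j := by
  simpa using Tuple.monotone_sort f (hf i j hij).le

/-- Stanley's fundamental lemma: sorting a monotone map splits the monotone maps into classes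
indexed by the linear extensions. -/
theorem sum_X_pow_permDes (hr : ∀ i j, r i j → i < j) {S : Finset (Equiv.Perm (Fin n))}
    (hS : ∀ σ, σ ∈ S ↔ ∀ i j, r i j → σ.symm i < σ.symm j) {N : ℕ → Finset (Fin n → ℕ)}
    (hN : ∀ m f, f ∈ N m ↔ (∀ i, f i ≤ m) ∧ ∀ i j, r i j → f i ≤ f j)
    {R : Type*} [CommRing R] :
    ∑ σ ∈ S, (X : R⟦X⟧) ^ permDes σ =
      (1 - X) ^ (n + 1) * PowerSeries.mk fun m => ((N m).card : R) := by
  have hcard (m : ℕ) : (N m).card = ∑ σ ∈ S, (gapSeqs n (descentGaps σ) m).card := by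
    have hmaps : ∀ f ∈ N m, Tuple.sort f ∈ S := fun f hf =>
      (hS _).mpr fun _ _ => sort_symm_lt_of_forall_le hr ((hN m f).mp hf).2
    rw [card_eq_sum_card_fiberwise hmaps]
    refine sum_congr rfl fun σ hσ => ?_
    rw [← card_filter_sort_eq]
    congr 1
    ext f
    simp only [mem_filter, hN, Fintype.mem_piFinset, mem_range, Nat.lt_succ_iff]
    refine and_congr_left fun hsort => and_iff_left fun i j hij => ?_
    subst hsort
    exact forall_le_of_sort_symm_lt ((hS _).mp hσ) hij
  have hmk : (PowerSeries.mk fun m => ((N m).card : R)) =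
      ∑ σ ∈ S, PowerSeries.mk fun m => ((gapSeqs n (descentGaps σ) m).card : R) := by
    ext m
    simp [hcard]
  rw [hmk, mul_sum]
  exact sum_congr rfl fun σ _ => by rw [one_sub_X_pow_mul_mk_card_gapSeqs, sum_descentGaps]

end Monotone

end PPartition

/-! ### Matching steps and contours of forests -/

theorem sub_emod_two_of_forall_step {h : ℕ → ℤ} {p q : ℕ} (hpq : p ≤ q)
    (hstep : ∀ x, p ≤ x → x < q → h (x + 1) = h x + 1 ∨ h (x + 1) = h x - 1) :
    (h q - h p - (q - p)) % 2 = 0 := by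
  induction q, hpq using Nat.le_induction with
  | base => simp
  | succ q hq ih =>
    have hprev := ih fun x hx hxq => hstep x hx (by omega)
    have hlast := hstep q hq q.lt_succ_self
    push_cast
    omega

/-- The up step at position `s` of a path with heights `h` is matched with the down step at
position `t`. -/
def IsMatch (h : ℕ → ℤ) (s t : ℕ) : Prop :=
  s < t ∧ h (t + 1) = h s ∧ ∀ y, s < y → y ≤ t → h s < h y

theorem exists_isMatch_of_up {h : ℕ → ℤ} {p q : ℕ} (hpq : p < q) (hend : h q ≤ h p)
    (hstep : ∀ x, p ≤ x → x < q → h (x + 1) = h x + 1 ∨ h (x + 1) = h x - 1)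
    (hup : h p < h (p + 1)) : ∃ t < q, IsMatch h p t := by
  classical
  have hex : ∃ x, p < x ∧ h x ≤ h p := ⟨q, hpq, hend⟩
  obtain ⟨hp, hret⟩ := Nat.find_spec hex
  have hmin : Nat.find hex ≤ q := Nat.find_min' hex ⟨hpq, hend⟩
  obtain ⟨t, ht⟩ : ∃ t, Nat.find hex = t + 1 := Nat.exists_eq_add_one.mpr (by omega)
  have habove (y : ℕ) (hy : p < y) (hyt : y ≤ t) : h p < h y := by
    by_contra! hle
    exact Nat.find_min hex (by omega) ⟨hy, hle⟩
  rw [ht] at hp hret hmin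
  have hpt : p < t := (Nat.lt_succ_iff.mp hp).lt_of_ne (by rintro rfl; omega)
  have hlast := hstep t hpt.le hmin
  have hprev := habove t hpt le_rfl
  exact ⟨t, hmin, hpt, by omega, habove⟩

theorem exists_isMatch_of_down {h : ℕ → ℤ} {p q : ℕ} (hpq : p ≤ q) (hstart : h p ≤ h (q + 1))
    (hstep : ∀ x, p ≤ x → x ≤ q → h (x + 1) = h x + 1 ∨ h (x + 1) = h x - 1)
    (hdown : h (q + 1) < h q) : ∃ s, IsMatch h s q := by
  classical
  obtain ⟨s, hs⟩ : ∃ s, s = Nat.findGreatest (fun x => h x ≤ h (q + 1)) q := ⟨_, rfl⟩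
  have hlow : h s ≤ h (q + 1) :=
    hs ▸ Nat.findGreatest_spec (P := fun x => h x ≤ h (q + 1)) hpq hstart
  have hps : p ≤ s := hs ▸ Nat.le_findGreatest hpq hstart
  have habove (y : ℕ) (hy : s < y) (hyq : y ≤ q) : h (q + 1) < h y :=
    not_le.mp (Nat.findGreatest_is_greatest (hs ▸ hy) hyq)
  have hsq : s < q := (hs ▸ Nat.findGreatest_le q : s ≤ q).lt_of_ne (by rintro rfl; omega)
  have hfirst := hstep s hps hsq.le
  have hnext := habove (s + 1) s.lt_succ_self hsq
  have hret : h (q + 1) = h s := by omega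
  exact ⟨s, hsq, hret, hret ▸ habove⟩

namespace PlaneForest

/-- The heights `h` from position `p` on trace the contour of a forest, two steps per vertex. -/
def IsContour : PlaneForest → ℕ → (ℕ → ℤ) → Prop
  | nil, _, _ => True
  | node a r, p, h => h (p + 1) = h p + 1 ∧ a.IsContour (p + 1) h ∧
      h (p + 1 + 2 * a.size + 1) = h p ∧ r.IsContour (p + 1 + 2 * a.size + 1) h

namespace IsContour

theorem end_eq {t : PlaneForest} {p : ℕ} {h : ℕ → ℤ} (ht : t.IsContour p h) :
    h (p + 2 * t.size) = h p := by
  induction t generalizing p with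
  | nil => rfl
  | node a r _ ihr =>
    obtain ⟨_, _, hret, hr⟩ := ht
    rw [← hret, ← ihr hr, size]
    congr 1
    ring

theorem le {t : PlaneForest} {p : ℕ} {h : ℕ → ℤ} (ht : t.IsContour p h) {y : ℕ} (hy : p ≤ y)
    (hy' : y ≤ p + 2 * t.size) : h p ≤ h y := by
  induction t generalizing p with
  | nil =>
    rw [size] at hy'
    rw [show y = p by omega]
  | node a r iha ihr =>
    obtain ⟨hup, ha, hret, hr⟩ := ht
    rw [size] at hy'
    rcases eq_or_lt_of_le hy with rfl | hlt
    · exact le_rfl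
    by_cases hya : y ≤ p + 1 + 2 * a.size
    · linarith [iha ha hlt hya]
    · exact hret.symm.trans_le (ihr hr (by omega) (by omega))

theorem isMatch_root {a r : PlaneForest} {p : ℕ} {h : ℕ → ℤ} (ht : (node a r).IsContour p h) :
    IsMatch h p (p + 1 + 2 * a.size) := by
  obtain ⟨hup, ha, hret, -⟩ := ht
  refine ⟨by omega, hret, fun y hy hy' => ?_⟩
  have := ha.le hy hy'
  omega

end IsContour

end PlaneForest

theorem IsMatch.right_unique {h : ℕ → ℤ} {s t t' : ℕ} (hm : IsMatch h s t) (hm' : IsMatch h s t') :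
    t = t' := by
  obtain ⟨hst, hret, hin⟩ := hm
  obtain ⟨hst', hret', hin'⟩ := hm'
  by_contra hne
  rcases Nat.lt_or_gt_of_ne hne with hlt | hlt
  · exact (hin' (t + 1) (by omega) hlt).ne' hret
  · exact (hin (t' + 1) (by omega) hlt).ne' hret'

theorem IsMatch.lt_of_lt_of_le {h : ℕ → ℤ} {s t s' t' : ℕ} (hm : IsMatch h s t)
    (hm' : IsMatch h s' t') (hlt : s < s') (hle : s' ≤ t) : t' < t := by
  obtain ⟨-, hret, hin⟩ := hm
  obtain ⟨hst', hret', hin'⟩ := hm'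
  have hs' := hin s' hlt hle
  by_contra! hge
  rcases hge.eq_or_lt with rfl | hgt
  · omega
  · have := hin' (t + 1) (by omega) hgt
    omega

namespace PlaneForest

theorem exists_isContour (n p : ℕ) (h : ℕ → ℤ)
    (hstep : ∀ x, p ≤ x → x < p + 2 * n → h (x + 1) = h x + 1 ∨ h (x + 1) = h x - 1)
    (hend : h (p + 2 * n) = h p) (hle : ∀ x, p ≤ x → x ≤ p + 2 * n → h p ≤ h x) :
    ∃ t : PlaneForest, t.size = n ∧ t.IsContour p h := by
  induction n using Nat.strong_induction_on generalizing p with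
  | _ n ih =>
    rcases Nat.eq_zero_or_pos n with rfl | hn
    · exact ⟨nil, rfl, trivial⟩
    have hup : h (p + 1) = h p + 1 := by
      have := hstep p le_rfl (by omega)
      have := hle (p + 1) (by omega) (by omega)
      omega
    obtain ⟨q, hq, hpq, hret, hin⟩ := exists_isMatch_of_up (by omega) hend.le hstep (by omega)
    have hpar := sub_emod_two_of_forall_step (h := h) (p := p) (q := q + 1) (by omega)
      fun x hx hxq => hstep x hx (by omega)
    obtain ⟨k, rfl⟩ : ∃ k, q = p + 1 + 2 * k := ⟨(q - p) / 2, by omega⟩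
    have hdown : h (p + 1 + 2 * k) = h (p + 1) := by
      have := hstep (p + 1 + 2 * k) (by omega) hq
      have := hin (p + 1 + 2 * k) hpq le_rfl
      omega
    obtain ⟨a, rfl, hsa⟩ := ih k (by omega) (p + 1) (fun x hx hxk => hstep x (by omega) (by omega))
      hdown fun x hx hxk => by have := hin x hx hxk; omega
    have hlen : p + 1 + 2 * a.size + 1 + 2 * (n - a.size - 1) = p + 2 * n := by omega
    obtain ⟨r, hr, hsr⟩ := ih (n - a.size - 1) (by omega) (p + 1 + 2 * a.size + 1)
      (fun x hx hxr => hstep x (by omega) (by omega)) (by rw [hlen, hend, hret])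
      fun x hx hxr => by rw [hret]; exact hle x (by omega) (by omega)
    exact ⟨node a r, by rw [size]; omega, hup, hsa, hret, hsr⟩

end PlaneForest

/-! ### Configurations over a forest -/

theorem nodup_flatMap_of_key {α β : Type*} {l : List α} {f : α → List β} (hl : l.Nodup)
    (key : β → α) (hkey : ∀ x ∈ l, ∀ e ∈ f x, key e = x) (hf : ∀ x ∈ l, (f x).Nodup) :
    (l.flatMap f).Nodup :=
  List.nodup_flatMap.mpr ⟨hf, hl.imp_of_mem fun hx hy hxy e he he' =>
    hxy ((hkey _ hx e he).symm.trans (hkey _ hy e he'))⟩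

theorem sum_map_flatMap {α β M : Type*} [AddMonoid M] (l : List α) (f : α → List β) (w : β → M) :
    ((l.flatMap f).map w).sum = (l.map fun a => ((f a).map w).sum).sum := by
  induction l with
  | nil => rfl
  | cons a l ih => simp [ih]

theorem sum_map_range {M : Type*} [AddCommMonoid M] (w : ℕ → M) (n : ℕ) :
    ((List.range n).map w).sum = ∑ k ∈ range n, w k := rfl

/-- Final height of a list of (join count, next height) pairs starting at height `i`. -/
def endHt : ℕ → List (ℕ × ℕ) → ℕ
  | i, [] => i
  | _, e :: L => endHt e.2 L

/-- Total descent of the heights along a list of (join count, next height) pairs. -/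
def descentWt : ℕ → List (ℕ × ℕ) → ℕ
  | _, [] => 0
  | i, e :: L => (i - e.2) + descentWt e.2 L

theorem endHt_append (i : ℕ) (L L' : List (ℕ × ℕ)) :
    endHt i (L ++ L') = endHt (endHt i L) L' := by
  induction L generalizing i with
  | nil => rfl
  | cons e _ ih => exact ih e.2

theorem descentWt_append (i : ℕ) (L L' : List (ℕ × ℕ)) :
    descentWt i (L ++ L') = descentWt i L + descentWt (endHt i L) L' := by
  induction L generalizing i with
  | nil => simp [descentWt, endHt]
  | cons e L ih => simp only [List.cons_append, descentWt, endHt, ih]; ring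

namespace PlaneForest

/-- The possible heights after an up step of the lower path that starts at height `i`. -/
def upOptions (i : ℕ) : List ℕ := if i = 0 then [0] else [i, i - 1]

theorem nodup_upOptions (i : ℕ) : (upOptions i).Nodup := by
  rw [upOptions]
  split_ifs
  · exact List.nodup_singleton 0
  · simp only [List.nodup_cons, List.mem_singleton, List.not_mem_nil, not_false_eq_true,
      List.nodup_nil, and_true]
    omega

/-- The sequences of (join count, next height) pairs over the steps of a forest whose join counts
are at least `f`, starting at height `i`. -/
def configs : PlaneForest → ℕ → ℕ → List (List (ℕ × ℕ))
  | nil, _, _ => [[]]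
  | node a r, f, i =>
    (upOptions i).flatMap fun c₁ => (List.range (c₁ + 1 - f)).flatMap fun k =>
      (configs a (f + k) c₁).flatMap fun La => [endHt c₁ La, endHt c₁ La + 1].flatMap fun c₃ =>
        (configs r f c₃).map fun Lr => (f + k, c₁) :: (La ++ (f + k, c₃) :: Lr)

theorem mem_configs_node {a r : PlaneForest} {f i : ℕ} {L : List (ℕ × ℕ)} :
    L ∈ configs (node a r) f i ↔ ∃ c₁ ∈ upOptions i, ∃ k ∈ List.range (c₁ + 1 - f),
      ∃ La ∈ configs a (f + k) c₁, ∃ c₃ ∈ [endHt c₁ La, endHt c₁ La + 1], ∃ Lr ∈ configs r f c₃,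
        (f + k, c₁) :: (La ++ (f + k, c₃) :: Lr) = L := by
  simp only [configs, List.mem_flatMap, List.mem_map]

theorem length_of_mem_configs {t : PlaneForest} {f i : ℕ} {L : List (ℕ × ℕ)}
    (hL : L ∈ configs t f i) : L.length = 2 * t.size := by
  induction t generalizing f i L with
  | nil => simp [List.mem_singleton.mp hL, size]
  | node a r iha ihr =>
    obtain ⟨c₁, -, k, -, La, ha, c₃, -, Lr, hr, rfl⟩ := mem_configs_node.mp hL
    simp only [List.length_cons, List.length_append, iha ha, ihr hr, size]
    ring

theorem nodup_configs (t : PlaneForest) (f i : ℕ) : (configs t f i).Nodup := by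
  induction t generalizing f i with
  | nil => exact List.nodup_singleton []
  | node a r iha ihr =>
    refine nodup_flatMap_of_key (nodup_upOptions i) (fun L => (L.headD (0, 0)).2) ?_ fun c₁ _ =>
      nodup_flatMap_of_key List.nodup_range (fun L => (L.headD (0, 0)).1 - f) ?_ fun k _ =>
      nodup_flatMap_of_key (iha _ c₁) (fun L => L.tail.take (2 * a.size)) ?_ fun La ha =>
      nodup_flatMap_of_key (by simp) (fun L => (L.getD (2 * a.size + 1) (0, 0)).2) ?_ fun c₃ _ =>
      (ihr f c₃).map fun L L' h => by simpa using h
    · intro c₁ _ L hL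
      simp only [List.mem_flatMap, List.mem_map] at hL
      obtain ⟨_, _, _, _, _, _, _, _, rfl⟩ := hL
      rfl
    · intro k _ L hL
      simp only [List.mem_flatMap, List.mem_map] at hL
      obtain ⟨_, _, _, _, _, _, rfl⟩ := hL
      exact Nat.add_sub_cancel_left f k
    · intro La ha L hL
      simp only [List.mem_flatMap, List.mem_map] at hL
      obtain ⟨_, _, _, _, rfl⟩ := hL
      exact List.take_left' (length_of_mem_configs ha)
    · intro c₃ _ L hL
      obtain ⟨_, _, rfl⟩ := List.mem_map.mp hL
      simp [← length_of_mem_configs ha]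

section ConfigSum

open PowerSeries hiding mk

variable {R : Type*} [CommRing R]

/-- Generating function of the configurations over a forest by total descent, weighted by a
function of the final height. -/
def configSum (z : R) (t : PlaneForest) (f i : ℕ) (φ : ℕ → R) : R :=
  ((configs t f i).map fun L => z ^ descentWt i L * φ (endHt i L)).sum

theorem configSum_node (z : R) (a r : PlaneForest) (f i : ℕ) (φ : ℕ → R) :
    configSum z (node a r) f i φ = ((upOptions i).map fun c => z ^ (i - c) *
      ∑ k ∈ range (c + 1 - f), configSum z a (f + k) c fun y =>
        configSum z r f y φ + configSum z r f (y + 1) φ).sum := by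
  have hnil (x : ℕ) : x - (x + 1) = 0 := Nat.sub_eq_zero_of_le x.le_succ
  simp only [configSum, configs, sum_map_flatMap, sum_map_range, List.map_map, mul_sum,
    List.map_cons, List.map_nil, List.sum_cons, List.sum_nil, add_zero, Function.comp_def,
    descentWt, endHt, descentWt_append, endHt_append, Nat.sub_self, hnil, pow_add, pow_zero,
    one_mul, ← List.sum_map_mul_left, mul_add, mul_assoc, List.sum_map_add, sum_add_distrib]

theorem sum_range_configSum {z : R} {a : PlaneForest} {f : ℕ}
    (ha : ∀ (φ : ℕ → R) (f j : ℕ), configSum z a f (f + j) φ =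
      coeff j (transfer z a (PowerSeries.mk fun x => φ (f + x)))) (φ : ℕ → R) (j : ℕ) :
    ∑ k ∈ range (f + j + 1 - f), configSum z a (f + k) (f + j) φ =
      coeff j (floorSum (transfer z a) (PowerSeries.mk fun x => φ (f + x))) := by
  rw [coeff_floorSum, add_assoc, Nat.add_sub_cancel_left]
  refine sum_congr rfl fun k hk => ?_
  rw [mem_range] at hk
  rw [show f + j = f + k + (j - k) by omega, ha]
  congr 2
  ext x
  rw [coeff_iterate_divX, PowerSeries.coeff_mk, PowerSeries.coeff_mk, add_assoc, add_comm k]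

theorem configSum_eq_coeff_transfer (z : R) (t : PlaneForest) (φ : ℕ → R) (f j : ℕ) :
    configSum z t f (f + j) φ =
      coeff j (transfer z t (PowerSeries.mk fun x => φ (f + x))) := by
  induction t generalizing φ f j with
  | nil => simp [configSum, configs, transfer, descentWt, endHt]
  | node a r iha ihr =>
    set ψ : ℕ → R := fun y => configSum z r f y φ + configSum z r f (y + 1) φ with hψ
    set χ := transfer z r (PowerSeries.mk fun x => φ (f + x)) with hχ
    have hlower : χ + divX χ = PowerSeries.mk fun x => ψ (f + x) := by
      ext x
      rw [map_add, coeff_divX, PowerSeries.coeff_mk, ← ihr, ← ihr]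
      rfl
    rw [configSum_node, ← hψ, transfer_node_apply, ← hχ, hlower, add_mul, one_mul, mul_assoc,
      map_add, coeff_C_mul, upOptions]
    cases j with
    | zero =>
      rw [coeff_zero_X_mul, mul_zero, add_zero, ← sum_range_configSum iha]
      split_ifs with hf
      · simp [hf]
      · have hempty : f - 1 + 1 - f = 0 := by omega
        simp [hempty]
    | succ j =>
      rw [coeff_succ_X_mul, ← sum_range_configSum iha, ← sum_range_configSum iha,
        if_neg (by omega)]
      have hdiff : f + (j + 1) - (f + j) = 1 := by omega
      simp [hdiff]

end ConfigSum

end PlaneForest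

/-! ### Profiles over a path -/

/-- The list of (join count, next height) pairs read off from heights `c` and join counts `b` over
the steps `p, …, p + len - 1`. -/
def segList (c b : ℕ → ℕ) (p len : ℕ) : List (ℕ × ℕ) :=
  (List.range' p len).map fun x => (b x, c (x + 1))

theorem segList_succ (c b : ℕ → ℕ) (p len : ℕ) :
    segList c b p (len + 1) = (b p, c (p + 1)) :: segList c b (p + 1) len := by
  simp [segList, List.range'_succ]

theorem segList_add (c b : ℕ → ℕ) (p k l : ℕ) :
    segList c b p (k + l) = segList c b p k ++ segList c b (p + k) l := by
  simp [segList, ← List.map_append]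

theorem length_segList (c b : ℕ → ℕ) (p len : ℕ) : (segList c b p len).length = len := by
  simp [segList]

theorem endHt_segList (c b : ℕ → ℕ) (p len : ℕ) :
    endHt (c p) (segList c b p len) = c (p + len) := by
  induction len generalizing p with
  | zero => rfl
  | succ k ih => rw [segList_succ, endHt, ih, add_right_comm, add_assoc]

theorem descentWt_segList (c b : ℕ → ℕ) (p len : ℕ) :
    descentWt (c p) (segList c b p len) = ∑ k ∈ range len, (c (p + k) - c (p + k + 1)) := by
  induction len generalizing p with
  | zero => rfl
  | succ k ih =>
    rw [segList_succ, descentWt, ih, sum_range_succ', add_comm]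
    simp only [add_zero, add_assoc, add_comm 1]

theorem exists_segList_eq (L : List (ℕ × ℕ)) : ∃ c b : ℕ → ℕ, c 0 = 0 ∧
    segList c b 0 L.length = L ∧ ∀ x, L.length ≤ x → b x = 0 := by
  refine ⟨fun x => if x = 0 then 0 else (L.getD (x - 1) 0).2, fun x => (L.getD x 0).1, rfl,
    List.ext_getElem (length_segList ..) fun i _ hi => by simp [segList, hi], fun x hx => ?_⟩
  simp [List.getElem?_eq_none hx]

/-- The conditions on the heights `c` and join counts `b` of a cover-inclusive tiling, over the
steps `p, …, q - 1` of a path with heights `h`, with all join counts at least `f`. -/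
structure IsProfile (h : ℕ → ℤ) (c b : ℕ → ℕ) (f p q : ℕ) : Prop where
  up : ∀ x, p ≤ x → x < q → h (x + 1) = h x + 1 →
    b x ≤ c (x + 1) ∧ (c x = c (x + 1) ∨ c x = c (x + 1) + 1)
  down : ∀ x, p ≤ x → x < q → h (x + 1) = h x - 1 →
    b x ≤ c x ∧ (c (x + 1) = c x ∨ c (x + 1) = c x + 1)
  nest : ∀ s t, IsMatch h s t → p ≤ s → t < q → ∀ y, s ≤ y → y ≤ t → b s ≤ b y ∧ b t ≤ b y
  floor : ∀ x, p ≤ x → x < q → f ≤ b x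

namespace IsProfile

variable {h : ℕ → ℤ} {c b : ℕ → ℕ} {f p q : ℕ}

theorem refl (h : ℕ → ℤ) (c b : ℕ → ℕ) (f p : ℕ) : IsProfile h c b f p p where
  up _ hx hxp := absurd hxp hx.not_gt
  down _ hx hxp := absurd hxp hx.not_gt
  nest _ _ hm hs htp := absurd (hm.1.trans htp) hs.not_gt
  floor _ hx hxp := absurd hxp hx.not_gt

theorem restrict (hP : IsProfile h c b f p q) {f' p' q' : ℕ} (hp : p ≤ p') (hq : q' ≤ q)
    (hfloor : ∀ x, p' ≤ x → x < q' → f' ≤ b x) : IsProfile h c b f' p' q' where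
  up x hx hxq := hP.up x (hp.trans hx) (hxq.trans_le hq)
  down x hx hxq := hP.down x (hp.trans hx) (hxq.trans_le hq)
  nest s t hm hs htq := hP.nest s t hm (hp.trans hs) (htq.trans_le hq)
  floor := hfloor

theorem append {m : ℕ} (hP : IsProfile h c b f p m) (hQ : IsProfile h c b f m q)
    (hm : ∀ s t, IsMatch h s t → p ≤ s → s < m → t < m) : IsProfile h c b f p q where
  up x hx hxq := (lt_or_ge x m).elim (hP.up x hx) fun hmx => hQ.up x hmx hxq
  down x hx hxq := (lt_or_ge x m).elim (hP.down x hx) fun hmx => hQ.down x hmx hxq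
  nest s t hst hs htq := (lt_or_ge s m).elim (fun hsm => hP.nest s t hst hs (hm s t hst hs hsm))
    fun hms => hQ.nest s t hst hms htq
  floor x hx hxq := (lt_or_ge x m).elim (hP.floor x hx) fun hmx => hQ.floor x hmx hxq

theorem enclose (hP : IsProfile h c b (b p) (p + 1) q) (hpq : IsMatch h p q)
    (hup : b p ≤ c (p + 1) ∧ (c p = c (p + 1) ∨ c p = c (p + 1) + 1)) (hb : b q = b p)
    (hdown : b q ≤ c q ∧ (c (q + 1) = c q ∨ c (q + 1) = c q + 1)) :
    IsProfile h c b (b p) p (q + 1) := by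
  have hlt := hpq.1
  have hret := hpq.2.1
  have hfirst := hpq.2.2 (p + 1) p.lt_succ_self hlt
  have hlast := hpq.2.2 q hlt le_rfl
  have hfloor (x : ℕ) (hx : p ≤ x) (hxq : x < q + 1) : b p ≤ b x := by
    rcases hx.eq_or_lt with rfl | hpx
    · exact le_rfl
    rcases (Nat.lt_succ_iff.mp hxq).eq_or_lt with rfl | hxq
    · exact hb.ge
    · exact hP.floor x hpx hxq
  refine ⟨fun x hx hxq hstep => ?_, fun x hx hxq hstep => ?_, fun s t hst hs htq y hy hyt => ?_,
    hfloor⟩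
  · rcases hx.eq_or_lt with rfl | hpx
    · exact hup
    · exact hP.up x hpx ((Nat.lt_succ_iff.mp hxq).lt_of_ne (by rintro rfl; omega)) hstep
  · rcases (Nat.lt_succ_iff.mp hxq).eq_or_lt with rfl | hxq
    · exact hdown
    · exact hP.down x (hx.lt_of_ne (by rintro rfl; omega)) hxq hstep
  · rcases hs.eq_or_lt with rfl | hps
    · rw [hst.right_unique hpq, hb, and_self]
      exact hfloor y hy (by omega)
    · have := hst.1
      exact hP.nest s t hst hps (hpq.lt_of_lt_of_le hst hps (by omega)) y hy hyt

theorem of_node {r : ℕ} (hpq : IsMatch h p q)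
    (hup : b p ≤ c (p + 1) ∧ (c p = c (p + 1) ∨ c p = c (p + 1) + 1)) (hb : b q = b p)
    (hdown : b q ≤ c q ∧ (c (q + 1) = c q ∨ c (q + 1) = c q + 1)) (hf : f ≤ b p)
    (hP : IsProfile h c b (b p) (p + 1) q) (hQ : IsProfile h c b f (q + 1) r) :
    IsProfile h c b f p r := by
  have hroot := hP.enclose hpq hup hb hdown
  refine (hroot.restrict le_rfl le_rfl fun x hx hxq => hf.trans (hroot.floor x hx hxq)).append hQ
    fun s t hst hs hsq => ?_
  rcases hs.eq_or_lt with rfl | hps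
  · rw [hst.right_unique hpq]
    exact q.lt_succ_self
  · exact (hpq.lt_of_lt_of_le hst hps (Nat.lt_succ_iff.mp hsq)).trans q.lt_succ_self

end IsProfile

namespace PlaneForest

theorem le_endHt_of_mem_configs {t : PlaneForest} {f i : ℕ} {L : List (ℕ × ℕ)}
    (hL : L ∈ configs t f i) (hf : f ≤ i) : f ≤ endHt i L := by
  induction t generalizing f i L with
  | nil => rwa [List.mem_singleton.mp hL]
  | node a r iha ihr =>
    obtain ⟨c₁, -, k, hk, La, ha, c₃, hc₃, Lr, hr, rfl⟩ := mem_configs_node.mp hL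
    rw [List.mem_range] at hk
    have hmid := iha ha (by omega)
    simp only [List.mem_cons, List.not_mem_nil, or_false] at hc₃
    simp only [endHt, endHt_append]
    exact ihr hr (by omega)

theorem mem_upOptions {i j : ℕ} : j ∈ upOptions i ↔ i = j ∨ i = j + 1 := by
  rw [upOptions]
  split_ifs
  · rw [List.mem_singleton]
    omega
  · rw [List.mem_pair]
    omega

theorem segList_mem_configs_node {a r : PlaneForest} {c b : ℕ → ℕ} {f p q : ℕ}
    (hq : q = p + 1 + 2 * a.size) :
    segList c b p (2 * (node a r).size) ∈ configs (node a r) f (c p) ↔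
      (c p = c (p + 1) ∨ c p = c (p + 1) + 1) ∧ f ≤ b p ∧ b p ≤ c (p + 1) ∧
      segList c b (p + 1) (2 * a.size) ∈ configs a (b p) (c (p + 1)) ∧ b q = b p ∧
      (c (q + 1) = c q ∨ c (q + 1) = c q + 1) ∧
      segList c b (q + 1) (2 * r.size) ∈ configs r f (c (q + 1)) := by
  have hsplit : segList c b p (2 * (node a r).size) = (b p, c (p + 1)) ::
      (segList c b (p + 1) (2 * a.size) ++ (b q, c (q + 1)) ::
        segList c b (q + 1) (2 * r.size)) := by
    rw [size, show 2 * (a.size + 1 + r.size) = 2 * a.size + (2 * r.size + 1) + 1 by ring,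
      segList_succ, segList_add, segList_succ, hq]
  have hend : endHt (c (p + 1)) (segList c b (p + 1) (2 * a.size)) = c q := by
    rw [endHt_segList, hq]
  rw [hsplit, mem_configs_node]
  simp only [mem_upOptions, List.mem_range, List.mem_cons, List.not_mem_nil, or_false]
  constructor
  · rintro ⟨c₁, hc₁, k, hk, La, ha, c₃, hc₃, Lr, hr, heq⟩
    simp only [List.cons.injEq, Prod.mk.injEq] at heq
    obtain ⟨⟨hb, rfl⟩, heq⟩ := heq
    obtain ⟨rfl, htail⟩ := List.append_inj heq
      ((length_of_mem_configs ha).trans (length_segList ..).symm)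
    simp only [List.cons.injEq, Prod.mk.injEq] at htail
    obtain ⟨⟨hb', rfl⟩, rfl⟩ := htail
    rw [hend] at hc₃
    rw [hb] at ha hb'
    exact ⟨hc₁, by omega, by omega, ha, hb'.symm, hc₃, hr⟩
  · rintro ⟨hup, hf, hb, ha, hb', hdown, hr⟩
    refine ⟨_, hup, b p - f, by omega, _, ?_, c (q + 1), by rwa [hend], _, hr, ?_⟩
    · rwa [Nat.add_sub_cancel' hf]
    · rw [Nat.add_sub_cancel' hf, hb']

theorem segList_mem_configs_iff {t : PlaneForest} {h : ℕ → ℤ} {c b : ℕ → ℕ} {f p : ℕ}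
    (ht : t.IsContour p h) :
    segList c b p (2 * t.size) ∈ configs t f (c p) ↔ IsProfile h c b f p (p + 2 * t.size) := by
  induction t generalizing f p with
  | nil => exact iff_of_true (List.mem_singleton_self []) (IsProfile.refl h c b f p)
  | node a r iha ihr =>
    have hroot := ht.isMatch_root
    obtain ⟨hup, ha, hret, hr⟩ := ht
    have hlast := ha.end_eq
    obtain ⟨q, hq⟩ : ∃ q, q = p + 1 + 2 * a.size := ⟨_, rfl⟩
    have hend : p + 2 * (node a r).size = q + 1 + 2 * r.size := by rw [hq, size]; ring
    rw [segList_mem_configs_node hq, iha ha, hend, hq, ihr hr]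
    rw [← hq] at hroot hlast hret ⊢
    constructor
    · rintro ⟨hcp, hf, hb, hP, hb', hcq, hQ⟩
      have hbq : b q ≤ c q := by
        have := le_endHt_of_mem_configs ((iha ha).mpr (hq ▸ hP)) hb
        rwa [endHt_segList, ← hq, ← hb'] at this
      exact .of_node hroot ⟨hb, hcp⟩ hb' ⟨hbq, hcq⟩ hf hP hQ
    · intro hP
      have hcp := hP.up p le_rfl (by omega) hup
      have hcq := hP.down q hroot.1.le (by omega) (by omega)
      have hnest := hP.nest p q hroot le_rfl (by omega)
      have hfloor := hP.floor
      exact ⟨hcp.2, hfloor p le_rfl (by omega), hcp.1,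
        hP.restrict (by omega) (by omega) fun x hx hxq => (hnest x (by omega) hxq.le).1,
        (hnest p le_rfl hroot.1.le).2.antisymm (hnest q hroot.1.le le_rfl).1, hcq.2,
        hP.restrict (by omega) le_rfl fun x hx => hfloor x (by omega)⟩

end PlaneForest

/-! ### Labellings of up steps and order polynomials -/

/-- The positions of the up steps among the steps `p, …, p + len - 1`. -/
def upSteps (h : ℕ → ℤ) (p len : ℕ) : List ℕ :=
  (List.range' p len).filter fun x => h x < h (x + 1)

theorem mem_upSteps {h : ℕ → ℤ} {p len x : ℕ} :
    x ∈ upSteps h p len ↔ (p ≤ x ∧ x < p + len) ∧ h x < h (x + 1) := by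
  simp [upSteps, List.mem_range'_1]

theorem upSteps_sorted (h : ℕ → ℤ) (p len : ℕ) : (upSteps h p len).Pairwise (· < ·) :=
  List.Pairwise.filter _ List.pairwise_lt_range'

/-- The values of `F` on the up steps among `p, …, q - 1` lie in `{lo, …, m}` and increase weakly
from each chord to the chords nested in it. -/
structure IsLabelling (h : ℕ → ℤ) (F : ℕ → ℕ) (lo m p q : ℕ) : Prop where
  lower : ∀ x, p ≤ x → x < q → h x < h (x + 1) → lo ≤ F x
  upper : ∀ x, p ≤ x → x < q → h x < h (x + 1) → F x ≤ m
  nest : ∀ s t, IsMatch h s t → p ≤ s → t < q → ∀ y, s < y → y < t → h y < h (y + 1) → F s ≤ F y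

namespace IsLabelling

variable {h : ℕ → ℤ} {F : ℕ → ℕ} {lo m p q : ℕ}

theorem refl (h : ℕ → ℤ) (F : ℕ → ℕ) (lo m p : ℕ) : IsLabelling h F lo m p p where
  lower _ hx hxp := absurd hxp hx.not_gt
  upper _ hx hxp := absurd hxp hx.not_gt
  nest _ _ hm hs htp := absurd (hm.1.trans htp) hs.not_gt

theorem restrict (hF : IsLabelling h F lo m p q) {lo' p' q' : ℕ} (hp : p ≤ p') (hq : q' ≤ q)
    (hlo : ∀ x, p' ≤ x → x < q' → h x < h (x + 1) → lo' ≤ F x) :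
    IsLabelling h F lo' m p' q' where
  lower := hlo
  upper x hx hxq := hF.upper x (hp.trans hx) (hxq.trans_le hq)
  nest s t hm hs htq := hF.nest s t hm (hp.trans hs) (htq.trans_le hq)

theorem of_node {r : ℕ} (hpq : IsMatch h p q) (hlo : lo ≤ F p) (hm : F p ≤ m)
    (hF : IsLabelling h F (F p) m (p + 1) q) (hG : IsLabelling h F lo m (q + 1) r) :
    IsLabelling h F lo m p r := by
  have hlt := hpq.1
  have hdown : ¬h q < h (q + 1) := (hpq.2.1.trans_lt (hpq.2.2 q hlt le_rfl)).not_gt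
  refine ⟨fun x hx hxr hx' => ?_, fun x hx hxr hx' => ?_, fun s t hst hs htr => ?_⟩
  · rcases hx.eq_or_lt with rfl | hpx
    · exact hlo
    rcases lt_trichotomy x q with hxq | rfl | hqx
    · exact hlo.trans (hF.lower x hpx hxq hx')
    · exact absurd hx' hdown
    · exact hG.lower x hqx hxr hx'
  · rcases hx.eq_or_lt with rfl | hpx
    · exact hm
    rcases lt_trichotomy x q with hxq | rfl | hqx
    · exact hF.upper x hpx hxq hx'
    · exact absurd hx' hdown
    · exact hG.upper x hqx hxr hx'
  · rcases hs.eq_or_lt with rfl | hps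
    · rw [hst.right_unique hpq]
      exact hF.lower
    · rcases le_or_gt s q with hsq | hqs
      · exact hF.nest s t hst hps (hpq.lt_of_lt_of_le hst hps hsq)
      · exact hG.nest s t hst hqs htr

end IsLabelling

namespace PlaneForest

/-- The order-preserving labellings of a forest with values in `{lo, …, m}`, listed in
preorder. -/
def labellings : PlaneForest → ℕ → ℕ → List (List ℕ)
  | nil, _, _ => [[]]
  | node a r, lo, m => (List.range (m + 1 - lo)).flatMap fun k =>
      (labellings a (lo + k) m).flatMap fun La =>
        (labellings r lo m).map fun Lr => (lo + k) :: (La ++ Lr)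

theorem mem_labellings_node {a r : PlaneForest} {lo m : ℕ} {L : List ℕ} :
    L ∈ labellings (node a r) lo m ↔ ∃ k ∈ List.range (m + 1 - lo),
      ∃ La ∈ labellings a (lo + k) m, ∃ Lr ∈ labellings r lo m, (lo + k) :: (La ++ Lr) = L := by
  simp only [labellings, List.mem_flatMap, List.mem_map]

theorem length_of_mem_labellings {t : PlaneForest} {lo m : ℕ} {L : List ℕ}
    (hL : L ∈ labellings t lo m) : L.length = t.size := by
  induction t generalizing lo m L with
  | nil => rw [List.mem_singleton.mp hL, List.length_nil, size]
  | node a r iha ihr =>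
    obtain ⟨k, -, La, ha, Lr, hr, rfl⟩ := mem_labellings_node.mp hL
    simp only [List.length_cons, List.length_append, iha ha, ihr hr, size]
    ring

theorem nodup_labellings (t : PlaneForest) (lo m : ℕ) : (labellings t lo m).Nodup := by
  induction t generalizing lo m with
  | nil => exact List.nodup_singleton []
  | node a r iha ihr =>
    refine nodup_flatMap_of_key List.nodup_range (fun L => L.headD 0 - lo) ?_ fun k _ =>
      nodup_flatMap_of_key (iha _ m) (fun L => L.tail.take a.size) ?_ fun La _ =>
      (ihr lo m).map fun L L' h => by simpa using h
    · intro k _ L hL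
      simp only [List.mem_flatMap, List.mem_map] at hL
      obtain ⟨_, _, _, _, rfl⟩ := hL
      exact Nat.add_sub_cancel_left lo k
    · intro La ha L hL
      obtain ⟨_, _, rfl⟩ := List.mem_map.mp hL
      exact List.take_left' (length_of_mem_labellings ha)

theorem length_labellings (t : PlaneForest) (lo s : ℕ) :
    (labellings t lo (lo + s)).length = t.orderPoly s := by
  induction t generalizing lo s with
  | nil => rfl
  | node a r iha ihr =>
    rw [labellings, orderPoly, List.length_flatMap, sum_map_range, sum_mul, ← sum_range_reflect,
      add_assoc, Nat.add_sub_cancel_left]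
    refine sum_congr rfl fun i hi => ?_
    rw [mem_range] at hi
    have hsplit : lo + s = lo + (s + 1 - 1 - i) + i := by omega
    simp only [List.length_flatMap, List.length_map, List.map_const', List.sum_replicate,
      smul_eq_mul, ihr]
    rw [hsplit, iha]

theorem upSteps_node {a r : PlaneForest} {p q : ℕ} {h : ℕ → ℤ}
    (ht : (node a r).IsContour p h) (hq : q = p + 1 + 2 * a.size) :
    upSteps h p (2 * (node a r).size) =
      p :: (upSteps h (p + 1) (2 * a.size) ++ upSteps h (q + 1) (2 * r.size)) := by
  obtain ⟨hup, ha, hret, -⟩ := ht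
  have hlast := ha.end_eq
  rw [← hq] at hret hlast
  rw [size, show 2 * (a.size + 1 + r.size) = 2 * a.size + (2 * r.size + 1) + 1 by ring,
    upSteps, List.range'_succ, ← List.range'_append_1, List.range'_succ, ← hq,
    List.filter_cons_of_pos (by simp [hup]), List.filter_append,
    List.filter_cons_of_neg (by simp [hret, hlast, hup])]
  rfl

theorem length_upSteps {t : PlaneForest} {p : ℕ} {h : ℕ → ℤ} (ht : t.IsContour p h) :
    (upSteps h p (2 * t.size)).length = t.size := by
  induction t generalizing p with
  | nil => rfl
  | node a r iha ihr =>
    rw [upSteps_node ht rfl, List.length_cons, List.length_append, iha ht.2.1, ihr ht.2.2.2, size]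
    ring

theorem exists_ofFn_eq_upSteps {t : PlaneForest} {h : ℕ → ℤ} (ht : t.IsContour 0 h) :
    ∃ u : Fin t.size → ℕ, List.ofFn u = upSteps h 0 (2 * t.size) := by
  obtain ⟨L, hL⟩ : ∃ L, L = upSteps h 0 (2 * t.size) := ⟨_, rfl⟩
  rw [← hL, ← length_upSteps ht, ← hL]
  exact ⟨L.get, List.ofFn_get L⟩

theorem cons_append_mem_labellings_node {a r : PlaneForest} {lo m v : ℕ} {La Lr : List ℕ}
    (hlen : La.length = a.size) : v :: (La ++ Lr) ∈ labellings (node a r) lo m ↔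
      lo ≤ v ∧ v ≤ m ∧ La ∈ labellings a v m ∧ Lr ∈ labellings r lo m := by
  rw [mem_labellings_node]
  constructor
  · rintro ⟨k, hk, La', ha, Lr', hr, heq⟩
    rw [List.mem_range] at hk
    obtain ⟨rfl, htail⟩ := List.cons.inj heq
    obtain ⟨rfl, rfl⟩ := List.append_inj htail ((length_of_mem_labellings ha).trans hlen.symm)
    exact ⟨by omega, by omega, ha, hr⟩
  · rintro ⟨hlo, hm, ha, hr⟩
    obtain ⟨k, rfl⟩ := Nat.exists_eq_add_of_le hlo
    exact ⟨k, List.mem_range.mpr (by omega), La, ha, Lr, hr, rfl⟩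

theorem map_upSteps_mem_labellings {t : PlaneForest} {p lo m : ℕ} {h : ℕ → ℤ} {F : ℕ → ℕ}
    (ht : t.IsContour p h) :
    (upSteps h p (2 * t.size)).map F ∈ labellings t lo m ↔
      IsLabelling h F lo m p (p + 2 * t.size) := by
  induction t generalizing p lo with
  | nil => exact iff_of_true (List.mem_singleton_self []) (IsLabelling.refl h F lo m p)
  | node a r iha ihr =>
    have hroot := ht.isMatch_root
    obtain ⟨q, hq⟩ : ∃ q, q = p + 1 + 2 * a.size := ⟨_, rfl⟩
    have hend : p + 2 * (node a r).size = q + 1 + 2 * r.size := by rw [hq, size]; ring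
    rw [upSteps_node ht hq, hend]
    obtain ⟨hup, ha, -, hr⟩ := ht
    rw [List.map_cons, List.map_append,
      cons_append_mem_labellings_node (by rw [List.length_map, length_upSteps ha]), iha ha, hq,
      ihr hr]
    rw [← hq] at hroot ⊢
    have := hroot.1
    have hpup : h p < h (p + 1) := by omega
    refine ⟨fun ⟨hlo, hm, hF, hG⟩ => .of_node hroot hlo hm hF hG, fun hF => ?_⟩
    exact ⟨hF.lower p le_rfl (by omega) hpup, hF.upper p le_rfl (by omega) hpup,
      hF.restrict p.le_succ (by omega) fun x hx => hF.nest p q hroot le_rfl (by omega) x hx,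
      hF.restrict (by omega) le_rfl fun x hx => hF.lower x (by omega)⟩

end PlaneForest

theorem strictMono_of_ofFn_eq_upSteps {n : ℕ} {h : ℕ → ℤ} {u : Fin n → ℕ}
    (hu : List.ofFn u = upSteps h 0 (2 * n)) : StrictMono u := by
  have hsorted := upSteps_sorted h 0 (2 * n)
  rw [← hu, List.pairwise_ofFn] at hsorted
  exact fun _ _ hij => hsorted hij

theorem exists_eq_iff_of_ofFn_eq_upSteps {n : ℕ} {h : ℕ → ℤ} {u : Fin n → ℕ}
    (hu : List.ofFn u = upSteps h 0 (2 * n)) (x : ℕ) :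
    (∃ i, u i = x) ↔ x < 2 * n ∧ h x < h (x + 1) := by
  rw [← Set.mem_range, ← List.mem_ofFn', hu, mem_upSteps, zero_add, and_iff_right x.zero_le]

theorem isLabelling_iff_of_ofFn_eq_upSteps {n : ℕ} {h : ℕ → ℤ} {u : Fin n → ℕ}
    (hu : List.ofFn u = upSteps h 0 (2 * n)) {F : ℕ → ℕ} {m : ℕ} :
    IsLabelling h F 0 m 0 (0 + 2 * n) ↔ (∀ i, F (u i) ≤ m) ∧
      ∀ i j, (∃ t < 2 * n, IsMatch h (u i) t ∧ u i < u j ∧ u j < t) → F (u i) ≤ F (u j) := by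
  have hmem := exists_eq_iff_of_ofFn_eq_upSteps hu
  have hup (i : Fin n) : u i < 2 * n ∧ h (u i) < h (u i + 1) := (hmem _).mp ⟨i, rfl⟩
  rw [zero_add]
  refine ⟨fun hF => ⟨fun i => hF.upper _ (Nat.zero_le _) (hup i).1 (hup i).2, ?_⟩,
    fun ⟨hm, hnest⟩ => ⟨fun x _ _ _ => Nat.zero_le _, fun x _ hx hx' => ?_, ?_⟩⟩
  · rintro i j ⟨t, ht, hst, hij, hjt⟩
    exact hF.nest _ t hst (Nat.zero_le _) ht _ hij hjt (hup j).2
  · obtain ⟨i, rfl⟩ := (hmem x).mpr ⟨hx, hx'⟩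
    exact hm i
  · intro s t hst _ ht y hsy hyt hy
    obtain ⟨j, rfl⟩ := (hmem y).mpr ⟨hyt.trans ht, hy⟩
    obtain ⟨i, rfl⟩ := (hmem s).mpr ⟨hst.1.trans ht, hst.2.2 _ s.lt_succ_self hst.1⟩
    exact hnest i j ⟨t, ht, hst, hsy, hyt⟩

theorem card_eq_orderPoly {t : PlaneForest} {h : ℕ → ℤ} (ht : t.IsContour 0 h)
    {u : Fin t.size → ℕ} (hu : List.ofFn u = upSteps h 0 (2 * t.size)) {m : ℕ}
    {N : Finset (Fin t.size → ℕ)}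
    (hN : ∀ f, f ∈ N ↔ (∀ i, f i ≤ m) ∧
      ∀ i j, (∃ e < 2 * t.size, IsMatch h (u i) e ∧ u i < u j ∧ u j < e) → f i ≤ f j) :
    N.card = t.orderPoly m := by
  have hinj := (strictMono_of_ofFn_eq_upSteps hu).injective
  have hmem (f : Fin t.size → ℕ) : f ∈ N ↔ List.ofFn f ∈ t.labellings 0 m := by
    have hF : f = Function.extend u f 0 ∘ u := (Function.extend_comp hinj f 0).symm
    rw [hF, ← List.map_ofFn, hu, PlaneForest.map_upSteps_mem_labellings ht,
      isLabelling_iff_of_ofFn_eq_upSteps hu, hN]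
    rfl
  have himage : N.image List.ofFn = (t.labellings 0 m).toFinset := by
    ext L
    rw [mem_image, List.mem_toFinset]
    refine ⟨fun ⟨f, hf, hL⟩ => hL ▸ (hmem f).mp hf, fun hL => ?_⟩
    obtain ⟨f, rfl⟩ : ∃ f : Fin t.size → ℕ, List.ofFn f = L := by
      rw [← PlaneForest.length_of_mem_labellings hL]
      exact ⟨L.get, List.ofFn_get L⟩
    exact ⟨f, (hmem f).mpr hL, rfl⟩
  rw [← PlaneForest.length_labellings t 0 m, zero_add,
    ← List.toFinset_card_of_nodup (PlaneForest.nodup_labellings t 0 m), ← himage,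
    card_image_of_injective N List.ofFn_injective]

/-! ### Chords and linear extensions of a Dyck path -/

theorem card_true_sub_card_false {m : ℕ} (step : Fin m → Bool) (k : ℕ) :
    ((univ.filter fun i : Fin m => (i : ℕ) < k ∧ step i = true).card : ℤ) -
        (univ.filter fun i : Fin m => (i : ℕ) < k ∧ step i = false).card =
      ∑ i : Fin m, if (i : ℕ) < k then (if step i = true then 1 else -1) else 0 := by
  rw [card_filter, card_filter, Nat.cast_sum, Nat.cast_sum, ← sum_sub_distrib]
  refine sum_congr rfl fun i _ => ?_
  by_cases hi : (i : ℕ) < k <;> cases step i <;> simp [hi]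

namespace DyckPath

variable {n : ℕ} (P : DyckPath n)

theorem pt_eq_card_sub_card (k : ℕ) : P.pt k =
    ((univ.filter fun i : Fin (2 * n) => (i : ℕ) < k ∧ P.step i = true).card : ℤ) -
      (univ.filter fun i : Fin (2 * n) => (i : ℕ) < k ∧ P.step i = false).card := by
  simp only [pt, ht, sub_add_cancel, Nat.cast_lt]

theorem pt_succ {k : ℕ} (hk : k < 2 * n) :
    P.pt (k + 1) = P.pt k + if P.step ⟨k, hk⟩ = true then 1 else -1 := by
  simp only [pt_eq_card_sub_card, card_true_sub_card_false, ← sub_eq_iff_eq_add',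
    ← sum_sub_distrib]
  rw [sum_eq_single (⟨k, hk⟩ : Fin (2 * n)) (fun i _ hi => ?_) (by simp)]
  · simp
  · have hik : (i : ℕ) < k + 1 ↔ (i : ℕ) < k := by
      have : (i : ℕ) ≠ k := fun h => hi (Fin.ext h)
      omega
    simp only [hik, sub_self]

theorem step_eq_true_iff {k : ℕ} (hk : k < 2 * n) :
    P.step ⟨k, hk⟩ = true ↔ P.pt k < P.pt (k + 1) := by
  rw [P.pt_succ hk]
  split_ifs with hstep <;> simp [hstep]

theorem pt_step {k : ℕ} (hk : k < 2 * n) :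
    P.pt (k + 1) = P.pt k + 1 ∨ P.pt (k + 1) = P.pt k - 1 := by
  rw [P.pt_succ hk]
  split_ifs
  · exact .inl rfl
  · exact .inr rfl

theorem pt_zero : P.pt 0 = 0 := by simp [pt_eq_card_sub_card]

theorem pt_nonneg {k : ℕ} (hk : k ≤ 2 * n) : 0 ≤ P.pt k := by
  have := P.nonneg k hk
  rw [pt_eq_card_sub_card]
  omega

theorem ht_eq_zero_of_le {x : ℤ} (hx : x ≤ -n) : P.ht x = 0 := by
  have hnot (i : Fin (2 * n)) : ¬((i : ℕ) : ℤ) < x + n := by omega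
  simp only [ht, hnot, false_and, filter_false, card_empty, sub_self]

theorem ht_eq_zero_of_ge {x : ℤ} (hx : n ≤ x) : P.ht x = 0 := by
  have hlt (i : Fin (2 * n)) : ((i : ℕ) : ℤ) < x + n := by omega
  have hcard := card_filter_add_card_filter_not (s := univ) fun i => P.step i = true
  simp only [Bool.not_eq_true, P.balanced, card_univ, Fintype.card_fin] at hcard
  simp only [ht, hlt, true_and, P.balanced]
  omega

theorem pt_eq_zero_of_ge {k : ℕ} (hk : 2 * n ≤ k) : P.pt k = 0 :=
  P.ht_eq_zero_of_ge (by omega)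

theorem exists_isContour : ∃ t : PlaneForest, t.size = n ∧ t.IsContour 0 P.pt := by
  refine PlaneForest.exists_isContour n 0 P.pt (fun x _ hx => P.pt_step (by omega)) ?_
    fun x _ hx => ?_
  · rw [P.pt_zero, P.pt_eq_zero_of_ge (by omega)]
  · exact P.pt_zero.trans_le (P.pt_nonneg (by omega))

theorem exists_isMatch_of_up {s : ℕ} (hs : s < 2 * n) (hup : P.pt s < P.pt (s + 1)) :
    ∃ t < 2 * n, IsMatch P.pt s t :=
  _root_.exists_isMatch_of_up hs ((P.pt_eq_zero_of_ge le_rfl).trans_le (P.pt_nonneg hs.le))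
    (fun _ _ hx => P.pt_step hx) hup

theorem isChord_iff {p q : ℕ} : IsChord P p q ↔ q < 2 * n ∧ IsMatch P.pt p q := by
  refine ⟨fun ⟨hpq, hq, _, _, hret, hin⟩ => ⟨hq, hpq, hret, hin⟩, fun ⟨hq, hpq, hret, hin⟩ =>
    ⟨hpq, hq, ⟨hpq.trans hq, ?_⟩, ⟨hq, ?_⟩, hret, hin⟩⟩
  · rw [step_eq_true_iff]
    exact hin _ p.lt_succ_self hpq
  · rw [← Bool.not_eq_true, step_eq_true_iff, hret]
    exact (hin q hpq le_rfl).not_gt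

end DyckPath

theorem IsStandardization.apply_symm {n : ℕ} {w u : Fin n → ℕ} {σ : Equiv.Perm (Fin n)}
    (hσ : IsStandardization w σ) (hu : StrictMono u) (hw : ∀ i, ∃ k, u k = w i) (i : Fin n) :
    w (σ.symm i) = u i := by
  choose g hg using fun i => hw (σ.symm i)
  have hmono : StrictMono g := fun i j hij => by
    rwa [← hu.lt_iff_lt, hg, hg, ← hσ, σ.apply_symm_apply, σ.apply_symm_apply]
  have hid : g = id := (hmono.range_inj strictMono_id).mp <| by
    rw [Set.range_id, (Finite.injective_iff_surjective.mp hmono.injective).range_eq]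
  rw [← hg, hid, id]

namespace DyckPath

variable {n : ℕ} (P : DyckPath n)

theorem linExt_iff {u : Fin n → ℕ} (hu : StrictMono u)
    (hmem : ∀ x, (∃ i, u i = x) ↔ x < 2 * n ∧ P.pt x < P.pt (x + 1)) {σ : Equiv.Perm (Fin n)} :
    LinExt P σ ↔ ∀ i j, (∃ t < 2 * n, IsMatch P.pt (u i) t ∧ u i < u j ∧ u j < t) →
      σ.symm i < σ.symm j := by
  constructor
  · rintro ⟨C, hC⟩ i j ⟨t, -, hit, hij, hjt⟩
    have hmatch (k : Fin n) := P.isChord_iff.mp (C.chord k)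
    have hl := hC.apply_symm hu fun k => (hmem _).mpr
      ⟨(hmatch k).2.1.trans (hmatch k).1, (hmatch k).2.2.2 _ (C.l k).lt_succ_self (hmatch k).2.1⟩
    have hi := (hmatch (σ.symm i)).2
    have hj := (hmatch (σ.symm j)).2
    rw [hl] at hi hj
    refine C.natural _ _ (by rwa [hl, hl]) ?_
    rw [hi.right_unique hit]
    exact hit.lt_of_lt_of_le hj hij hjt.le
  · intro hσ
    have hmatch (i : Fin n) : ∃ t < 2 * n, IsMatch P.pt (u i) t :=
      have hi := (hmem _).mp ⟨i, rfl⟩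
      P.exists_isMatch_of_up hi.1 hi.2
    choose r hr hm using hmatch
    refine ⟨⟨fun i => u (σ i), fun i => r (σ i), fun i => P.isChord_iff.mpr ⟨hr _, hm _⟩,
      hu.injective.comp σ.injective, fun i j hij hrij => ?_⟩, fun i j => hu.lt_iff_lt.symm⟩
    have := hσ (σ j) (σ i) ⟨r (σ j), hr _, hm _, hij, (hm (σ i)).1.trans hrij⟩
    rwa [σ.symm_apply_apply, σ.symm_apply_apply] at this

end DyckPath

theorem PlaneForest.IsContour.finsum_X_pow_permDes {t : PlaneForest} {P : DyckPath t.size}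
    (ht : t.IsContour 0 P.pt) {R : Type*} [CommRing R] :
    ∑ᶠ σ : {σ : Equiv.Perm (Fin t.size) // LinExt P σ},
        (PowerSeries.X : PowerSeries R) ^ permDes σ.1 =
      (1 - PowerSeries.X) ^ (t.size + 1) * PowerSeries.mk fun m => (t.orderPoly m : R) := by
  classical
  obtain ⟨u, hu⟩ := exists_ofFn_eq_upSteps ht
  have hmono := strictMono_of_ofFn_eq_upSteps hu
  let r (i j : Fin t.size) : Prop := ∃ e < 2 * t.size, IsMatch P.pt (u i) e ∧ u i < u j ∧ u j < e
  let N (m : ℕ) : Finset (Fin t.size → ℕ) :=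
    (Fintype.piFinset fun _ => range (m + 1)).filter fun f => ∀ i j, r i j → f i ≤ f j
  have hN (m : ℕ) (f : Fin t.size → ℕ) :
      f ∈ N m ↔ (∀ i, f i ≤ m) ∧ ∀ i j, r i j → f i ≤ f j := by
    simp only [N, mem_filter, Fintype.mem_piFinset, mem_range, Nat.lt_succ_iff]
  have hS (σ : Equiv.Perm (Fin t.size)) : σ ∈ univ.filter (fun σ => LinExt P σ) ↔
      ∀ i j, r i j → σ.symm i < σ.symm j := by
    rw [mem_filter_univ, P.linExt_iff hmono (exists_eq_iff_of_ofFn_eq_upSteps hu)]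
  rw [finsum_eq_sum_of_fintype, ← sum_subtype (univ.filter (LinExt P)) (by simp)
      fun σ => PowerSeries.X ^ permDes σ,
    sum_X_pow_permDes (fun i j ⟨_, _, _, hij, _⟩ => hmono.lt_iff_lt.mp hij) hS hN]
  simp only [card_eq_orderPoly ht hu (hN _)]

/-! ### Boxes between two Dyck paths -/

theorem card_up_sub_card_down {m : ℕ} {g : ℕ → ℤ}
    (hstep : ∀ k < m, g (k + 1) = g k + 1 ∨ g (k + 1) = g k - 1) {k : ℕ} (hk : k ≤ m) :
    ((univ.filter fun i : Fin m => (i : ℕ) < k ∧ decide (g i < g (i + 1)) = true).card : ℤ) -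
        (univ.filter fun i : Fin m => (i : ℕ) < k ∧ decide (g i < g (i + 1)) = false).card =
      g k - g 0 := by
  have hterm (i : Fin m) : (if (i : ℕ) < k then
      (if decide (g i < g (i + 1)) = true then (1 : ℤ) else -1) else 0) =
        if (i : ℕ) < k then g (i + 1) - g i else 0 := by
    have := hstep i i.isLt
    simp only [decide_eq_true_eq]
    split_ifs <;> omega
  have hfilter : (range m).filter (· < k) = range k := by
    ext x
    simp only [mem_filter, mem_range]
    omega
  rw [card_true_sub_card_false, sum_congr rfl fun i _ => hterm i,
    Fin.sum_univ_eq_sum_range (fun i => if i < k then g (i + 1) - g i else 0), ← sum_filter,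
    hfilter, sum_range_sub]

namespace DyckPath

variable {n : ℕ}

section

variable (P : DyckPath n)

theorem eq_of_pt_eq {P Q : DyckPath n} (h : ∀ k ≤ 2 * n, P.pt k = Q.pt k) : P = Q := by
  have hstep : P.step = Q.step := by
    funext ⟨i, hi⟩
    rw [Bool.eq_iff_iff, step_eq_true_iff, step_eq_true_iff, h i hi.le, h (i + 1) hi]
  cases P
  cases Q
  simpa using hstep

theorem pt_emod_two {k : ℕ} (hk : k ≤ 2 * n) : (P.pt k - k) % 2 = 0 := by
  simpa [P.pt_zero] using
    sub_emod_two_of_forall_step k.zero_le fun x _ hx => P.pt_step (hx.trans_le hk)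

theorem pt_le (k : ℕ) : P.pt k ≤ n := by
  have hle : (univ.filter fun i : Fin (2 * n) => (i : ℕ) < k ∧ P.step i = true).card ≤ n := by
    conv_rhs => rw [← P.balanced]
    exact card_le_card (monotone_filter_right _ fun i _ => And.right)
  rw [pt_eq_card_sub_card]
  omega

theorem exists_isMatch_crossing_left {a p : ℕ} (hap : a ≤ p) (hp : p ≤ 2 * n)
    (hlt : P.pt p < P.pt a) : ∃ s q, IsMatch P.pt s q ∧ s < a ∧ a ≤ q ∧ q < p := by
  classical
  have hex : ∃ q, a ≤ q ∧ P.pt (q + 1) < P.pt a := by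
    obtain ⟨d, rfl⟩ := Nat.exists_eq_add_of_lt (hap.lt_of_ne (by rintro rfl; omega))
    exact ⟨a + d, by omega, hlt⟩
  obtain ⟨q, hq⟩ : ∃ q, q = Nat.find hex := ⟨_, rfl⟩
  obtain ⟨haq, hdown⟩ := hq ▸ Nat.find_spec hex
  have habove (y : ℕ) (hay : a ≤ y) (hyq : y ≤ q) : P.pt a ≤ P.pt y := by
    rcases hay.eq_or_lt with rfl | hay
    · exact le_rfl
    · by_contra! hy
      exact Nat.find_min hex (m := y - 1) (by omega)
        ⟨by omega, by rwa [Nat.sub_add_cancel (by omega)]⟩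
  have hqp : q < p := by
    by_contra! hpq
    exact (habove p hap hpq).not_gt hlt
  obtain ⟨s, hs⟩ := exists_isMatch_of_down q.zero_le
    (P.pt_zero.trans_le (P.pt_nonneg (by omega))) (fun x _ hx => P.pt_step (by omega))
    (hdown.trans_le (habove q haq le_rfl))
  refine ⟨s, q, hs, ?_, haq, hqp⟩
  by_contra! has
  exact (habove s has hs.1.le).not_gt (hs.2.1 ▸ hdown)

theorem exists_isMatch_crossing_right {p e : ℕ} (hpe : p ≤ e) (he : e ≤ 2 * n)
    (hlt : P.pt p < P.pt e) :
    ∃ q t, IsMatch P.pt q t ∧ t < 2 * n ∧ p ≤ q ∧ q < e ∧ e ≤ t := by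
  classical
  obtain ⟨q, hq⟩ : ∃ q, q = Nat.findGreatest (fun x => P.pt x < P.pt e) e := ⟨_, rfl⟩
  have hlow : P.pt q < P.pt e :=
    hq ▸ Nat.findGreatest_spec (P := fun x => P.pt x < P.pt e) hpe hlt
  have hpq : p ≤ q := hq ▸ Nat.le_findGreatest hpe hlt
  have habove (y : ℕ) (hy : q < y) (hye : y ≤ e) : P.pt e ≤ P.pt y :=
    not_lt.mp (Nat.findGreatest_is_greatest (hq ▸ hy) hye)
  have hqe : q < e := (hq ▸ Nat.findGreatest_le e : q ≤ e).lt_of_ne (by rintro rfl; omega)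
  obtain ⟨t, ht, hm⟩ := P.exists_isMatch_of_up (hqe.trans_le he)
    (hlow.trans_le (habove _ q.lt_succ_self hqe))
  refine ⟨q, t, hm, ht, hpq, hqe, ?_⟩
  by_contra! hte
  have := habove (t + 1) (by have := hm.1; omega) hte
  rw [hm.2.1] at this
  exact this.not_gt hlow

end

section OfHeights

variable (g : ℕ → ℤ) (hzero : g 0 = 0) (hend : g (2 * n) = 0) (hnonneg : ∀ k ≤ 2 * n, 0 ≤ g k)
  (hstep : ∀ k < 2 * n, g (k + 1) = g k + 1 ∨ g (k + 1) = g k - 1)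

/-- The Dyck path with prescribed heights. -/
def ofHeights : DyckPath n where
  step i := decide (g i < g (i + 1))
  balanced := by
    have hcount := card_up_sub_card_down hstep le_rfl
    have hpart := card_filter_add_card_filter_not (s := univ)
      fun i : Fin (2 * n) => decide (g i < g (i + 1)) = true
    simp only [Bool.not_eq_true, card_univ, Fintype.card_fin] at hpart
    simp only [Fin.is_lt, true_and, hzero, hend] at hcount
    omega
  nonneg k hk := by
    have hcount := card_up_sub_card_down hstep hk
    have := hnonneg k hk
    omega

theorem pt_ofHeights {k : ℕ} (hk : k ≤ 2 * n) :
    (ofHeights g hzero hend hnonneg hstep).pt k = g k := by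
  rw [pt_eq_card_sub_card]
  exact (card_up_sub_card_down hstep hk).trans (by rw [hzero, sub_zero])

end OfHeights

section Cell

variable (P : DyckPath n)

/-- The bottom corner of the box of level `k` in the column above the `p`-th lattice point of
`P`. -/
def cell (p k : ℕ) : ℤ × ℤ := ((p : ℤ) - n, P.pt p + 2 * k)

theorem cell_inj {p k p' k' : ℕ} : P.cell p k = P.cell p' k' ↔ p = p' ∧ k = k' := by
  refine ⟨fun h => ?_, fun ⟨hp, hk⟩ => by rw [hp, hk]⟩
  rw [cell, cell, Prod.mk.injEq] at h
  obtain rfl : p = p' := by omega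
  exact ⟨rfl, by omega⟩

end Cell

/-- The number of boxes between `P` and `Q` in the column of their `p`-th lattice points,
truncated to `0` where `Q` lies below `P`. -/
def halfGap (P Q : DyckPath n) (p : ℕ) : ℕ := ((Q.pt p - P.pt p) / 2).toNat

section HalfGap

variable {P Q : DyckPath n}

theorem pt_eq_add_halfGap (hle : ∀ x, P.ht x ≤ Q.ht x) {p : ℕ} (hp : p ≤ 2 * n) :
    Q.pt p = P.pt p + 2 * P.halfGap Q p := by
  have := P.pt_emod_two hp
  have := Q.pt_emod_two hp
  have : P.pt p ≤ Q.pt p := hle _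
  unfold halfGap
  omega

theorem mem_skewCells_iff (hle : ∀ x, P.ht x ≤ Q.ht x) (x : ℤ × ℤ) :
    x ∈ skewCells P Q ↔ ∃ p ≤ 2 * n, ∃ k < P.halfGap Q p, x = P.cell p k := by
  obtain ⟨x, z⟩ := x
  simp only [skewCells, mem_filter, mem_product, mem_Icc, cell, Prod.mk.injEq]
  constructor
  · rintro ⟨⟨⟨hx, hx'⟩, -, -⟩, hlow, hupp, hparity⟩
    obtain ⟨p, rfl⟩ : ∃ p : ℕ, x = (p : ℤ) - n := ⟨(x + n).toNat, by omega⟩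
    have hp : p ≤ 2 * n := by omega
    change P.pt p ≤ z at hlow
    change z + 2 ≤ Q.pt p at hupp
    have := P.pt_emod_two hp
    have := pt_eq_add_halfGap hle hp
    exact ⟨p, hp, ((z - P.pt p) / 2).toNat, by omega, rfl, by omega⟩
  · rintro ⟨p, hp, k, hk, rfl, rfl⟩
    have := P.pt_emod_two hp
    have := pt_eq_add_halfGap hle hp
    have := Q.pt_le p
    have := P.pt_nonneg hp
    change _ ∧ P.pt p ≤ _ ∧ _ ≤ Q.pt p ∧ _
    omega

theorem cell_mem_skewCells_iff (hle : ∀ x, P.ht x ≤ Q.ht x) {p k : ℕ} :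
    P.cell p k ∈ skewCells P Q ↔ p ≤ 2 * n ∧ k < P.halfGap Q p := by
  rw [mem_skewCells_iff hle]
  refine ⟨fun ⟨p', hp, k', hk, h⟩ => ?_, fun ⟨hp, hk⟩ => ⟨p, hp, k, hk, rfl⟩⟩
  obtain ⟨rfl, rfl⟩ := P.cell_inj.mp h
  exact ⟨hp, hk⟩

theorem halfGap_of_up (hle : ∀ x, P.ht x ≤ Q.ht x) {x : ℕ} (hx : x < 2 * n)
    (hup : P.pt (x + 1) = P.pt x + 1) :
    P.halfGap Q x = P.halfGap Q (x + 1) ∨ P.halfGap Q x = P.halfGap Q (x + 1) + 1 := by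
  have := pt_eq_add_halfGap hle hx.le
  have := pt_eq_add_halfGap hle (p := x + 1) hx
  have := Q.pt_step hx
  omega

theorem halfGap_of_down (hle : ∀ x, P.ht x ≤ Q.ht x) {x : ℕ} (hx : x < 2 * n)
    (hdown : P.pt (x + 1) = P.pt x - 1) :
    P.halfGap Q (x + 1) = P.halfGap Q x ∨ P.halfGap Q (x + 1) = P.halfGap Q x + 1 := by
  have := pt_eq_add_halfGap hle hx.le
  have := pt_eq_add_halfGap hle (p := x + 1) hx
  have := Q.pt_step hx
  omega

theorem halfGap_zero : P.halfGap Q 0 = 0 := by simp [halfGap, pt_zero]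

theorem halfGap_last : P.halfGap Q (2 * n) = 0 := by simp [halfGap, pt_eq_zero_of_ge]

theorem halfGap_succ_sub (hle : ∀ x, P.ht x ≤ Q.ht x) (i : Fin (2 * n)) :
    P.halfGap Q (i + 1) - P.halfGap Q i =
      if P.step i = false ∧ Q.step i = true then 1 else 0 := by
  have hgap := pt_eq_add_halfGap hle i.isLt.le
  have hgap' := pt_eq_add_halfGap hle (p := i + 1) i.isLt
  rw [P.pt_succ i.isLt, Q.pt_succ i.isLt] at hgap'
  cases hP : P.step i <;> cases hQ : Q.step i <;>
    simp only [Fin.eta, hP, hQ, if_true, Bool.false_eq_true, Bool.true_eq_false, if_false, and_true,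
      and_false] at hgap' ⊢ <;> omega

end HalfGap

end DyckPath

theorem sum_succ_sub_add_eq (c : ℕ → ℕ) (m : ℕ) :
    ∑ k ∈ range m, (c (k + 1) - c k) + c 0 = ∑ k ∈ range m, (c k - c (k + 1)) + c m := by
  induction m with
  | zero => rfl
  | succ m ih =>
    rw [sum_range_succ, sum_range_succ]
    omega

namespace DyckTiling

variable {n : ℕ} (T : DyckTiling n)

/-- The number of boxes of the tiled shape in the column of the `p`-th lattice points. -/
def colHeight (p : ℕ) : ℕ := T.lower.halfGap T.upper p

theorem dis_eq_sum :
    T.dis = ∑ k ∈ range (2 * n), (T.colHeight k - T.colHeight (k + 1)) := by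
  have hsum := sum_succ_sub_add_eq T.colHeight (2 * n)
  simp only [colHeight, DyckPath.halfGap_zero, DyckPath.halfGap_last, add_zero] at hsum
  simp only [colHeight, ← hsum, dis, card_filter]
  rw [← Fin.sum_univ_eq_sum_range
    (fun k => T.lower.halfGap T.upper (k + 1) - T.lower.halfGap T.upper k)]
  exact (sum_congr rfl fun i _ => DyckPath.halfGap_succ_sub T.below i).symm

end DyckTiling

/-! ### Cover-inclusive tilings are determined by their counts -/

namespace DyckTiling

variable {n : ℕ} {T T₁ T₂ : DyckTiling n} {t u : Finset (ℤ × ℤ)}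

theorem mem_cover_iff {x : ℤ × ℤ} :
    (∃ t ∈ T.tiles, x ∈ t) ↔ ∃ p ≤ 2 * n, ∃ k < T.colHeight p, x = T.lower.cell p k := by
  simp only [colHeight, ← DyckPath.mem_skewCells_iff T.below, ← T.cover, mem_biUnion, id]

theorem exists_cell_of_mem (ht : t ∈ T.tiles) {x : ℤ × ℤ} (hx : x ∈ t) :
    ∃ p k, x = T.lower.cell p k := by
  obtain ⟨p, -, k, -, h⟩ := mem_cover_iff.mp ⟨t, ht, hx⟩
  exact ⟨p, k, h⟩

theorem exists_tile_iff {p k : ℕ} :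
    (∃ t ∈ T.tiles, T.lower.cell p k ∈ t) ↔ p ≤ 2 * n ∧ k < T.colHeight p := by
  simp only [colHeight, ← DyckPath.cell_mem_skewCells_iff T.below, ← T.cover, mem_biUnion, id]

theorem tile_unique (ht : t ∈ T.tiles) (hu : u ∈ T.tiles) {x : ℤ × ℤ} (hxt : x ∈ t)
    (hxu : x ∈ u) : t = u := by
  by_contra hne
  exact disjoint_left.mp (T.disj t ht u hu hne) hxt hxu

theorem exists_levels (ht : t ∈ T.tiles) : ∃ (a e : ℕ) (g : ℕ → ℕ), a ≤ e ∧
    T.lower.pt e + 2 * g e = T.lower.pt a + 2 * g a ∧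
    (∀ p, a ≤ p → p ≤ e → T.lower.pt a + 2 * g a ≤ T.lower.pt p + 2 * g p) ∧
    (∀ p, a ≤ p → p < e → T.lower.pt (p + 1) + 2 * g (p + 1) = T.lower.pt p + 2 * g p + 1 ∨
      T.lower.pt (p + 1) + 2 * g (p + 1) = T.lower.pt p + 2 * g p - 1) ∧
    ∀ p k, T.lower.cell p k ∈ t ↔ (a ≤ p ∧ p ≤ e) ∧ k = g p := by
  have hcell {x} (hx : x ∈ t) := exists_cell_of_mem ht hx
  obtain ⟨a, e, f, hae, hstep, hend, hmin, rfl⟩ := T.isDyck t ht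
  have hcol (x : ℤ) (hx : a ≤ x) (hxe : x ≤ e) :
      ∃ p k : ℕ, x = p - n ∧ f x = T.lower.pt p + 2 * k := by
    simpa [DyckPath.cell] using hcell (mem_image_of_mem (fun x => (x, f x)) (mem_Icc.mpr ⟨hx, hxe⟩))
  obtain ⟨a, -, rfl, -⟩ := hcol a le_rfl hae
  obtain ⟨e, -, rfl, -⟩ := hcol e hae le_rfl
  obtain ⟨g, hg⟩ : ∃ g : ℕ → ℕ, ∀ p, a ≤ p → p ≤ e → f (p - n) = T.lower.pt p + 2 * g p := by
    refine ⟨fun p => ((f (p - n) - T.lower.pt p) / 2).toNat, fun p hp hpe => ?_⟩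
    obtain ⟨p', k, hp', hk⟩ := hcol (p - n) (by omega) (by omega)
    obtain rfl : p = p' := by omega
    dsimp only
    omega
  have hae : a ≤ e := by omega
  refine ⟨a, e, g, hae, ?_, fun p hp hpe => ?_, fun p hp hpe => ?_, fun p k => ?_⟩
  · rw [← hg e hae le_rfl, ← hg a le_rfl hae, hend]
  · rw [← hg a le_rfl hae, ← hg p hp hpe]
    exact hmin _ (by omega) (by omega)
  · rw [← hg p hp hpe.le, ← hg (p + 1) (by omega) hpe]
    convert hstep (p - n) (by omega) (by omega) using 3 <;> push_cast <;> ring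
  · simp only [mem_image, mem_Icc, DyckPath.cell, Prod.mk.injEq]
    constructor
    · rintro ⟨_, hx, rfl, hf⟩
      rw [hg p (by omega) (by omega)] at hf
      omega
    · rintro ⟨hp, rfl⟩
      exact ⟨p - n, by omega, rfl, hg p hp.1 hp.2⟩

theorem level_unique (ht : t ∈ T.tiles) {p k l : ℕ} (hk : T.lower.cell p k ∈ t)
    (hl : T.lower.cell p l ∈ t) : k = l := by
  obtain ⟨_, _, g, -, -, -, -, hmem⟩ := exists_levels ht
  exact ((hmem p k).mp hk).2.trans ((hmem p l).mp hl).2.symm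

theorem cell_step (ht : t ∈ T.tiles) {p k l : ℕ} (hk : T.lower.cell p k ∈ t)
    (hl : T.lower.cell (p + 1) l ∈ t) :
    T.lower.pt (p + 1) + 2 * l = T.lower.pt p + 2 * k + 1 ∨
      T.lower.pt (p + 1) + 2 * l = T.lower.pt p + 2 * k - 1 := by
  obtain ⟨_, _, g, -, -, -, hstep, hmem⟩ := exists_levels ht
  obtain ⟨hp, rfl⟩ := (hmem _ _).mp hk
  obtain ⟨hp', rfl⟩ := (hmem _ _).mp hl
  exact hstep p hp.1 hp'.2

namespace CoverInclusive

theorem exists_tile_below (hT : T.CoverInclusive) (ht : t ∈ T.tiles) {p q k l : ℕ}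
    (hp : T.lower.cell p k ∈ t) (hq : T.lower.cell q l ∈ t) {j : ℕ} (hj : j < k) :
    ∃ u ∈ T.tiles, T.lower.cell p j ∈ u ∧ ∃ i, T.lower.cell q i ∈ u := by
  have hpk := exists_tile_iff.mp ⟨t, ht, hp⟩
  obtain ⟨u, hu, hpu⟩ := exists_tile_iff.mpr ⟨hpk.1, hj.trans hpk.2⟩
  obtain ⟨y, hy⟩ := hT t ht u hu
    ⟨_, hp, _, hpu, rfl, by simp only [DyckPath.cell]; omega⟩ _ hq
  obtain ⟨q', i, hq'⟩ := exists_cell_of_mem hu hy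
  obtain rfl : q = q' := by
    simp only [DyckPath.cell, Prod.mk.injEq] at hq'
    omega
  exact ⟨u, hu, hpu, i, hq' ▸ hy⟩

-- Infinite descent: a tile changing level between two columns forces a lower tile to do so.
theorem not_level_lt_of_adjacent (hT : T.CoverInclusive) (k : ℕ) (ht : t ∈ T.tiles) {p q l : ℕ}
    (hpq : q = p + 1 ∨ p = q + 1) (hp : T.lower.cell p k ∈ t) (hq : T.lower.cell q l ∈ t) :
    ¬k < l := by
  induction k using Nat.strong_induction_on generalizing t l with
  | _ k ih =>
    intro hkl
    obtain ⟨u, hu, hqu, i, hpu⟩ := hT.exists_tile_below ht hq hp hkl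
    have hp2n := (exists_tile_iff.mp ⟨t, ht, hp⟩).1
    have hq2n := (exists_tile_iff.mp ⟨t, ht, hq⟩).1
    have hik : i ≤ k := by
      rcases hpq with rfl | rfl
      · have := T.lower.pt_step (k := p) (by omega)
        have := cell_step ht hp hq
        have := cell_step hu hpu hqu
        omega
      · have := T.lower.pt_step (k := q) (by omega)
        have := cell_step ht hq hp
        have := cell_step hu hqu hpu
        omega
    rcases hik.eq_or_lt with rfl | hik
    · rw [← tile_unique ht hu hp hpu] at hqu
      exact hkl.ne (level_unique ht hqu hq)
    · exact ih i hik hu hpu hqu hik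

theorem exists_ends (hT : T.CoverInclusive) (ht : t ∈ T.tiles) : ∃ a e k : ℕ, a ≤ e ∧
    T.lower.pt e = T.lower.pt a ∧ (∀ p, a ≤ p → p ≤ e → T.lower.pt a ≤ T.lower.pt p) ∧
    ∀ p l, T.lower.cell p l ∈ t ↔ (a ≤ p ∧ p ≤ e) ∧ l = k := by
  obtain ⟨a, e, g, hae, hend, hmin, -, hmem⟩ := exists_levels ht
  have hconst (p : ℕ) (hp : a ≤ p) : p ≤ e → g p = g a := by
    induction p, hp using Nat.le_induction with
    | base => exact fun _ => rfl
    | succ p hp ih =>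
      intro hpe
      have hcell := (hmem p (g p)).mpr ⟨⟨hp, by omega⟩, rfl⟩
      have hcell' := (hmem (p + 1) (g (p + 1))).mpr ⟨⟨by omega, hpe⟩, rfl⟩
      rw [← ih (by omega)]
      exact ((not_lt.mp (hT.not_level_lt_of_adjacent _ ht (.inl rfl) hcell hcell')).antisymm
        (not_lt.mp (hT.not_level_lt_of_adjacent _ ht (.inr rfl) hcell' hcell)))
  refine ⟨a, e, g a, hae, ?_, fun p hp hpe => ?_, fun p l => ?_⟩
  · have := hconst e hae le_rfl
    omega
  · have := hmin p hp hpe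
    have := hconst p hp hpe
    omega
  · rw [hmem]
    exact and_congr_right fun ⟨hp, hpe⟩ => by rw [hconst p hp hpe]

theorem level_eq (hT : T.CoverInclusive) (ht : t ∈ T.tiles) {p q k l : ℕ}
    (hk : T.lower.cell p k ∈ t) (hl : T.lower.cell q l ∈ t) : k = l := by
  obtain ⟨_, _, _, -, -, -, hmem⟩ := hT.exists_ends ht
  exact ((hmem p k).mp hk).2.trans ((hmem q l).mp hl).2.symm

end CoverInclusive

/-- The boxes of level `k` above the `p`-th and `q`-th lattice points lie in the same tile. -/
def Joined (T : DyckTiling n) (p q k : ℕ) : Prop :=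
  ∃ t ∈ T.tiles, T.lower.cell p k ∈ t ∧ T.lower.cell q k ∈ t

theorem Joined.symm {p q k : ℕ} : T.Joined p q k → T.Joined q p k :=
  fun ⟨t, ht, hp, hq⟩ => ⟨t, ht, hq, hp⟩

theorem Joined.trans {p q r k : ℕ} : T.Joined p q k → T.Joined q r k → T.Joined p r k := by
  rintro ⟨t, ht, hp, hq⟩ ⟨u, hu, hq', hr⟩
  obtain rfl := tile_unique ht hu hq hq'
  exact ⟨t, ht, hp, hr⟩

theorem Joined.lt_colHeight_left {p q k : ℕ} (h : T.Joined p q k) :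
    p ≤ 2 * n ∧ k < T.colHeight p := by
  obtain ⟨t, ht, hp, -⟩ := h
  exact exists_tile_iff.mp ⟨t, ht, hp⟩

theorem Joined.lt_colHeight_right {p q k : ℕ} (h : T.Joined p q k) :
    q ≤ 2 * n ∧ k < T.colHeight q :=
  h.symm.lt_colHeight_left

/-- The number of levels at which the boxes on either side of the step `p` lie in the same tile.
In a cover-inclusive tiling these levels form an initial segment, whose length is taken here. -/
def joinCount (T : DyckTiling n) (p : ℕ) : ℕ := sInf {k | ¬T.Joined p (p + 1) k}

theorem lt_joinCount_iff_of_downward {p : ℕ}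
    (hdown : ∀ j k, T.Joined p (p + 1) k → j < k → T.Joined p (p + 1) j) {k : ℕ} :
    k < T.joinCount p ↔ T.Joined p (p + 1) k := by
  refine ⟨fun h => not_not.mp (Nat.notMem_of_lt_sInf h), fun h => ?_⟩
  have hmem : T.joinCount p ∈ {k | ¬T.Joined p (p + 1) k} :=
    Nat.sInf_mem ⟨T.colHeight p, fun hj => hj.lt_colHeight_left.2.ne rfl⟩
  by_contra! hle
  rcases hle.eq_or_lt with heq | hlt
  · exact hmem (heq ▸ h)
  · exact hmem (hdown _ _ h hlt)

namespace CoverInclusive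

theorem joined_of_lt (hT : T.CoverInclusive) {p q j k : ℕ} (h : T.Joined p q k) (hj : j < k) :
    T.Joined p q j := by
  obtain ⟨t, ht, hp, hq⟩ := h
  obtain ⟨u, hu, hpu, i, hqu⟩ := hT.exists_tile_below ht hp hq hj
  obtain rfl := hT.level_eq hu hpu hqu
  exact ⟨u, hu, hpu, hqu⟩

theorem lt_joinCount_iff (hT : T.CoverInclusive) {p k : ℕ} :
    k < T.joinCount p ↔ T.Joined p (p + 1) k :=
  lt_joinCount_iff_of_downward fun _ _ => hT.joined_of_lt

theorem joined_iff (hT : T.CoverInclusive) {p q k : ℕ} (hpq : p < q) :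
    T.Joined p q k ↔ ∀ r, p ≤ r → r < q → T.Joined r (r + 1) k := by
  constructor
  · rintro ⟨t, ht, hp, hq⟩ r hpr hrq
    obtain ⟨a, e, l, -, -, -, hmem⟩ := hT.exists_ends ht
    obtain ⟨hp, rfl⟩ := (hmem _ _).mp hp
    obtain ⟨hq, -⟩ := (hmem _ _).mp hq
    exact ⟨t, ht, (hmem _ _).mpr ⟨by omega, rfl⟩, (hmem _ _).mpr ⟨by omega, rfl⟩⟩
  · intro h
    induction q, hpq using Nat.le_induction with
    | base => exact h p le_rfl p.lt_succ_self
    | succ q hpq ih =>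
      exact (ih fun r hr hrq => h r hr (by omega)).trans (h q (by omega) q.lt_succ_self)

theorem joined_of_isMatch (hT : T.CoverInclusive) {s e k : ℕ} (hm : IsMatch T.lower.pt s e)
    (hj : T.Joined s (s + 1) k ∨ T.Joined e (e + 1) k) : T.Joined s (e + 1) k := by
  obtain ⟨hse, hret, hin⟩ := hm
  rcases hj with ⟨t, ht, hs, hs'⟩ | ⟨t, ht, he, he'⟩
  · obtain ⟨a, b, l, -, hend, hmin, hmem⟩ := hT.exists_ends ht
    obtain ⟨hs, rfl⟩ := (hmem _ _).mp hs
    obtain ⟨hs', -⟩ := (hmem _ _).mp hs'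
    have heb : e < b := by
      by_contra! hbe
      have := hin b hs'.2 hbe
      have := hmin s hs.1 hs.2
      omega
    exact ⟨t, ht, (hmem _ _).mpr ⟨hs, rfl⟩, (hmem _ _).mpr ⟨by omega, rfl⟩⟩
  · obtain ⟨a, b, l, -, -, hmin, hmem⟩ := hT.exists_ends ht
    obtain ⟨he, rfl⟩ := (hmem _ _).mp he
    obtain ⟨he', -⟩ := (hmem _ _).mp he'
    have has : a ≤ s := by
      by_contra! hsa
      have := hin a hsa he.1
      have := hmin (e + 1) he'.1 he'.2
      omega
    exact ⟨t, ht, (hmem _ _).mpr ⟨by omega, rfl⟩, (hmem _ _).mpr ⟨he', rfl⟩⟩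

theorem isProfile (hT : T.CoverInclusive) :
    IsProfile T.lower.pt T.colHeight T.joinCount 0 0 (2 * n) where
  up x _ hx hup :=
    ⟨le_of_forall_lt fun _ hk => (hT.lt_joinCount_iff.mp hk).lt_colHeight_right.2,
      DyckPath.halfGap_of_up T.below hx hup⟩
  down x _ hx hdown :=
    ⟨le_of_forall_lt fun _ hk => (hT.lt_joinCount_iff.mp hk).lt_colHeight_left.2,
      DyckPath.halfGap_of_down T.below hx hdown⟩
  nest s e hm _ _ y hsy hye := by
    have hin {k : ℕ} (hj : T.Joined s (s + 1) k ∨ T.Joined e (e + 1) k) : k < T.joinCount y :=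
      hT.lt_joinCount_iff.mpr <| (hT.joined_iff (by omega)).mp (hT.joined_of_isMatch hm hj) y hsy
        (by omega)
    exact ⟨le_of_forall_lt fun k hk => hin (.inl (hT.lt_joinCount_iff.mp hk)),
      le_of_forall_lt fun k hk => hin (.inr (hT.lt_joinCount_iff.mp hk))⟩
  floor _ _ _ := Nat.zero_le _

theorem subset_of_joined (h₁ : T₁.CoverInclusive) (hlow : T₁.lower = T₂.lower)
    (hj : ∀ p q k, T₁.Joined p q k → T₂.Joined p q k) (ht : t ∈ T₁.tiles) (hu : u ∈ T₂.tiles)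
    {p k : ℕ} (hpt : T₁.lower.cell p k ∈ t) (hpu : T₁.lower.cell p k ∈ u) : t ⊆ u := by
  intro x hx
  obtain ⟨q, l, rfl⟩ := exists_cell_of_mem ht hx
  obtain rfl := h₁.level_eq ht hpt hx
  obtain ⟨v, hv, hpv, hqv⟩ := hj p q k ⟨t, ht, hpt, hx⟩
  rw [← hlow] at hpv hqv
  rwa [tile_unique hu hv hpu hpv]

theorem joined_of_counts_eq (h₁ : T₁.CoverInclusive) (h₂ : T₂.CoverInclusive)
    (hc : ∀ p ≤ 2 * n, T₁.colHeight p = T₂.colHeight p)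
    (hb : ∀ p < 2 * n, T₁.joinCount p = T₂.joinCount p) (p q k : ℕ) (hj : T₁.Joined p q k) :
    T₂.Joined p q k := by
  wlog hpq : p ≤ q generalizing p q
  · exact (this q p hj.symm (le_of_not_ge hpq)).symm
  rcases hpq.eq_or_lt with rfl | hpq
  · obtain ⟨hp, hk⟩ := hj.lt_colHeight_left
    obtain ⟨u, hu, hpu⟩ := exists_tile_iff.mpr ⟨hp, hc p hp ▸ hk⟩
    exact ⟨u, hu, hpu, hpu⟩
  · have hq := hj.lt_colHeight_right.1
    rw [h₁.joined_iff hpq] at hj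
    refine (h₂.joined_iff hpq).mpr fun r hpr hrq => ?_
    rw [← h₂.lt_joinCount_iff, ← hb r (by omega), h₁.lt_joinCount_iff]
    exact hj r hpr hrq

theorem tiles_subset (h₁ : T₁.CoverInclusive) (h₂ : T₂.CoverInclusive)
    (hlow : T₁.lower = T₂.lower) (hc : ∀ p ≤ 2 * n, T₁.colHeight p = T₂.colHeight p)
    (hb : ∀ p < 2 * n, T₁.joinCount p = T₂.joinCount p) : T₁.tiles ⊆ T₂.tiles := by
  intro t ht
  obtain ⟨a, e, k, hae, -, -, hmem⟩ := h₁.exists_ends ht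
  have hat : T₁.lower.cell a k ∈ t := (hmem a k).mpr ⟨⟨le_rfl, hae⟩, rfl⟩
  obtain ⟨ha, hk⟩ := exists_tile_iff.mp ⟨t, ht, hat⟩
  obtain ⟨u, hu, hau⟩ := exists_tile_iff.mpr ⟨ha, hc a ha ▸ hk⟩
  have htu := h₁.subset_of_joined hlow (h₁.joined_of_counts_eq h₂ hc hb) ht hu hat (hlow ▸ hau)
  have hut := h₂.subset_of_joined hlow.symm
    (h₂.joined_of_counts_eq h₁ (fun p hp => (hc p hp).symm) fun p hp => (hb p hp).symm) hu ht hau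
    (hlow ▸ hat)
  rwa [htu.antisymm hut]

theorem eq_of_counts_eq (h₁ : T₁.CoverInclusive) (h₂ : T₂.CoverInclusive)
    (hlow : T₁.lower = T₂.lower) (hc : ∀ p ≤ 2 * n, T₁.colHeight p = T₂.colHeight p)
    (hb : ∀ p < 2 * n, T₁.joinCount p = T₂.joinCount p) : T₁ = T₂ := by
  have hup : T₁.upper = T₂.upper := by
    refine DyckPath.eq_of_pt_eq fun p hp => ?_
    have hgap := hc p hp
    rw [colHeight, colHeight] at hgap
    rw [DyckPath.pt_eq_add_halfGap T₁.below hp, DyckPath.pt_eq_add_halfGap T₂.below hp, hgap, hlow]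
  have htiles := (h₁.tiles_subset h₂ hlow hc hb).antisymm
    (h₂.tiles_subset h₁ hlow.symm (fun p hp => (hc p hp).symm) fun p hp => (hb p hp).symm)
  cases T₁
  cases T₂
  congr

end CoverInclusive

end DyckTiling

/-! ### The tiling with a given profile -/

/-- `[a, e]` is a maximal interval all of whose steps have label greater than `k`. -/
structure IsMaxRun (b : ℕ → ℕ) (a e k : ℕ) : Prop where
  le : a ≤ e
  joined : ∀ w, a ≤ w → w < e → k < b w
  left : ∀ w, w + 1 = a → b w ≤ k
  right : b e ≤ k

theorem IsMaxRun.subset {b : ℕ → ℕ} {a e k a' e' k' p : ℕ} (h : IsMaxRun b a e k)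
    (h' : IsMaxRun b a' e' k') (hk : k' ≤ k) (hp : a ≤ p ∧ p ≤ e) (hp' : a' ≤ p ∧ p ≤ e') :
    a' ≤ a ∧ e ≤ e' := by
  constructor
  · by_contra! ha
    have := h.joined (a' - 1) (by omega) (by omega)
    have := h'.left (a' - 1) (by omega)
    omega
  · by_contra! he
    have := h.joined e' (by omega) he
    have := h'.right
    omega

theorem exists_run_start (b : ℕ → ℕ) (p k : ℕ) :
    ∃ a ≤ p, (∀ w, a ≤ w → w < p → k < b w) ∧ ∀ w, w + 1 = a → b w ≤ k := by
  induction p with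
  | zero => exact ⟨0, le_rfl, by omega, by omega⟩
  | succ p ih =>
    by_cases hp : k < b p
    · obtain ⟨a, ha, hin, hleft⟩ := ih
      refine ⟨a, by omega, fun w hw hwp => ?_, hleft⟩
      rcases (Nat.lt_succ_iff.mp hwp).eq_or_lt with rfl | hwp
      · exact hp
      · exact hin w hw hwp
    · exact ⟨p + 1, le_rfl, by omega, fun w hw => by rwa [Nat.succ.inj hw, ← not_lt]⟩

theorem exists_isMaxRun {b : ℕ → ℕ} {m : ℕ} (hb : ∀ x, m ≤ x → b x = 0) (p k : ℕ) :
    ∃ a e, (a ≤ p ∧ p ≤ e) ∧ IsMaxRun b a e k := by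
  obtain ⟨a, ha, hin, hleft⟩ := exists_run_start b p k
  have hex : ∃ e, p ≤ e ∧ b e ≤ k :=
    ⟨max p m, le_max_left _ _, (hb _ (le_max_right _ _)).trans_le k.zero_le⟩
  obtain ⟨hpe, hright⟩ := Nat.find_spec hex
  refine ⟨a, Nat.find hex, ⟨ha, hpe⟩, ha.trans hpe, fun w haw hwe => ?_, hleft, hright⟩
  by_cases hwp : w < p
  · exact hin w haw hwp
  · exact not_le.mp fun hwk => Nat.find_min hex hwe ⟨not_lt.mp hwp, hwk⟩

namespace DyckPath

variable {n : ℕ}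

section RunCells

variable {P : DyckPath n} {a e k : ℕ}

/-- The boxes of level `k` in the columns `a, …, e` above `P`. -/
def runCells (P : DyckPath n) (a e k : ℕ) : Finset (ℤ × ℤ) :=
  (Icc a e).image fun p => P.cell p k

theorem mem_runCells {x : ℤ × ℤ} :
    x ∈ P.runCells a e k ↔ ∃ p, (a ≤ p ∧ p ≤ e) ∧ P.cell p k = x := by
  simp only [runCells, mem_image, mem_Icc]

theorem cell_mem_runCells {p l : ℕ} :
    P.cell p l ∈ P.runCells a e k ↔ (a ≤ p ∧ p ≤ e) ∧ l = k := by
  rw [mem_runCells]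
  refine ⟨fun ⟨q, hq, h⟩ => ?_, fun ⟨hq, hl⟩ => ⟨p, hq, by rw [hl]⟩⟩
  obtain ⟨rfl, rfl⟩ := P.cell_inj.mp h
  exact ⟨hq, rfl⟩

theorem isDyckTile_runCells (hae : a ≤ e) (he : e ≤ 2 * n) (hend : P.pt e = P.pt a)
    (hle : ∀ p, a ≤ p → p ≤ e → P.pt a ≤ P.pt p) : IsDyckTile (P.runCells a e k) := by
  have hpoint (x : ℤ) (hx : (a : ℤ) - n ≤ x) : ∃ p : ℕ, x = (p : ℤ) - n :=
    ⟨(x + n).toNat, by omega⟩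
  refine ⟨(a : ℤ) - n, (e : ℤ) - n, fun x => P.ht x + 2 * k, by omega, ?_,
    congrArg (· + 2 * (k : ℤ)) hend, ?_, ?_⟩
  · intro x hx hx'
    obtain ⟨p, rfl⟩ := hpoint x hx
    have hstep := P.pt_step (k := p) (by omega)
    rw [pt, pt, show ((p + 1 : ℕ) : ℤ) - n = (p : ℤ) - n + 1 by push_cast; ring] at hstep
    dsimp only
    omega
  · intro x hx hx'
    obtain ⟨p, rfl⟩ := hpoint x hx
    exact add_le_add_left (hle p (by omega) (by omega)) _
  · ext x
    rw [mem_runCells, mem_image]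
    constructor
    · rintro ⟨p, hp, rfl⟩
      exact ⟨(p : ℤ) - n, by rw [mem_Icc]; omega, rfl⟩
    · rintro ⟨y, hy, rfl⟩
      rw [mem_Icc] at hy
      obtain ⟨p, rfl⟩ := hpoint y hy.1
      exact ⟨p, by omega, rfl⟩

end RunCells

/-- The pairs of column heights `c` and join counts `b` that occur for the cover-inclusive Dyck
tilings with lower path `P`. -/
structure IsTilingProfile (P : DyckPath n) (c b : ℕ → ℕ) : Prop where
  isProfile : IsProfile P.pt c b 0 0 (2 * n)
  zero : c 0 = 0
  last : c (2 * n) = 0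
  eq_zero : ∀ x, 2 * n ≤ x → b x = 0

namespace IsTilingProfile

variable {P : DyckPath n} {c b : ℕ → ℕ} {a e k p : ℕ}

theorem le_and_le_succ (h : P.IsTilingProfile c b) (p : ℕ) : b p ≤ c p ∧ b p ≤ c (p + 1) := by
  by_cases hp : p < 2 * n
  · rcases P.pt_step hp with hup | hdown
    · have := h.isProfile.up p p.zero_le hp hup
      omega
    · have := h.isProfile.down p p.zero_le hp hdown
      omega
  · rw [h.eq_zero p (not_lt.mp hp)]
    exact ⟨Nat.zero_le _, Nat.zero_le _⟩

/-- The path lying `c p` boxes above `P` in each column. -/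
def upper (h : P.IsTilingProfile c b) : DyckPath n :=
  ofHeights (fun p => P.pt p + 2 * c p) (by rw [P.pt_zero, h.zero]; rfl)
    (by rw [P.pt_eq_zero_of_ge le_rfl, h.last]; rfl)
    (fun p hp => by have := P.pt_nonneg hp; omega)
    (fun p hp => by
      rcases P.pt_step hp with hup | hdown
      · have := h.isProfile.up p p.zero_le hp hup
        omega
      · have := h.isProfile.down p p.zero_le hp hdown
        omega)

theorem pt_upper (h : P.IsTilingProfile c b) (hp : p ≤ 2 * n) :
    h.upper.pt p = P.pt p + 2 * c p :=
  pt_ofHeights _ _ _ _ _ hp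

theorem halfGap_upper (h : P.IsTilingProfile c b) (hp : p ≤ 2 * n) :
    P.halfGap h.upper p = c p := by
  rw [halfGap, h.pt_upper hp]
  omega

theorem ht_le_ht_upper (h : P.IsTilingProfile c b) (x : ℤ) : P.ht x ≤ h.upper.ht x := by
  rcases le_total x (-n) with hx | hx
  · rw [P.ht_eq_zero_of_le hx, h.upper.ht_eq_zero_of_le hx]
  rcases le_total (n : ℤ) x with hx' | hx'
  · rw [P.ht_eq_zero_of_ge hx', h.upper.ht_eq_zero_of_ge hx']
  obtain ⟨p, rfl⟩ : ∃ p : ℕ, x = (p : ℤ) - n := ⟨(x + n).toNat, by omega⟩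
  change P.pt p ≤ h.upper.pt p
  rw [h.pt_upper (by omega)]
  omega

theorem pt_ge_of_isMaxRun (h : P.IsTilingProfile c b) (hr : IsMaxRun b a e k) (he : e ≤ 2 * n)
    (hap : a ≤ p) (hpe : p ≤ e) : P.pt a ≤ P.pt p ∧ P.pt e ≤ P.pt p := by
  constructor
  · by_contra! hlt
    obtain ⟨s, q, hm, hsa, haq, hqp⟩ := P.exists_isMatch_crossing_left hap (hpe.trans he) hlt
    have := (h.isProfile.nest s q hm s.zero_le (by omega) (a - 1) (by omega) (by omega)).2
    have := hr.joined q haq (by omega)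
    have := hr.left (a - 1) (by omega)
    omega
  · by_contra! hlt
    obtain ⟨q, t, hm, ht, hpq, hqe, het⟩ := P.exists_isMatch_crossing_right hpe he hlt
    have := (h.isProfile.nest q t hm q.zero_le ht e hqe.le het).1
    have := hr.joined q (hap.trans hpq) hqe
    have := hr.right
    omega

theorem pt_eq_of_isMaxRun (h : P.IsTilingProfile c b) (hr : IsMaxRun b a e k) (he : e ≤ 2 * n) :
    P.pt e = P.pt a :=
  (h.pt_ge_of_isMaxRun hr he le_rfl hr.le).2.antisymm (h.pt_ge_of_isMaxRun hr he hr.le le_rfl).1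

theorem lt_of_isMaxRun (h : P.IsTilingProfile c b) (hr : IsMaxRun b a e k) (hk : k < c a)
    (hap : a ≤ p) (hpe : p ≤ e) : k < c p := by
  rcases hap.eq_or_lt with rfl | hap
  · exact hk
  · obtain ⟨q, rfl⟩ := Nat.exists_eq_add_of_lt hap
    exact (hr.joined (a + q) (by omega) hpe).trans_le (h.le_and_le_succ _).2

end IsTilingProfile

open Classical in
/-- The tiles with labels `b` filling columns of heights `c` above `P`: at each level, one tile for
every maximal run of joined columns. -/
def runTiles (P : DyckPath n) (c b : ℕ → ℕ) : Finset (Finset (ℤ × ℤ)) :=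
  (range (2 * n + 1) ×ˢ range (2 * n + 1)).biUnion fun x =>
    ((range (c x.1)).filter (IsMaxRun b x.1 x.2)).image (P.runCells x.1 x.2)

theorem mem_runTiles {P : DyckPath n} {c b : ℕ → ℕ} {t : Finset (ℤ × ℤ)} :
    t ∈ P.runTiles c b ↔
      ∃ a e k, e ≤ 2 * n ∧ k < c a ∧ IsMaxRun b a e k ∧ P.runCells a e k = t := by
  simp only [runTiles, mem_biUnion, mem_product, mem_image, mem_filter, mem_range, Prod.exists,
    Nat.lt_succ_iff]
  constructor
  · rintro ⟨a, e, ⟨-, he⟩, k, ⟨hk, hr⟩, rfl⟩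
    exact ⟨a, e, k, he, hk, hr, rfl⟩
  · rintro ⟨a, e, k, he, hk, hr, rfl⟩
    exact ⟨a, e, ⟨hr.le.trans he, he⟩, k, ⟨hk, hr⟩, rfl⟩

theorem disjoint_of_mem_runTiles {P : DyckPath n} {c b : ℕ → ℕ} {t u : Finset (ℤ × ℤ)}
    (ht : t ∈ P.runTiles c b) (hu : u ∈ P.runTiles c b) (hne : t ≠ u) : Disjoint t u := by
  obtain ⟨a, e, k, -, -, hr, rfl⟩ := mem_runTiles.mp ht
  obtain ⟨a', e', k', -, -, hr', rfl⟩ := mem_runTiles.mp hu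
  rw [disjoint_left]
  intro x hx hx'
  obtain ⟨p, hp, rfl⟩ := mem_runCells.mp hx
  obtain ⟨hp', rfl⟩ := cell_mem_runCells.mp hx'
  have hsub := hr.subset hr' le_rfl hp hp'
  have hsub' := hr'.subset hr le_rfl hp' hp
  exact hne (by rw [hsub.1.antisymm hsub'.1, hsub.2.antisymm hsub'.2])

namespace IsTilingProfile

variable {P : DyckPath n} {c b : ℕ → ℕ} {a e k p : ℕ} {t : Finset (ℤ × ℤ)}

theorem isDyckTile_of_mem_runTiles (h : P.IsTilingProfile c b) (ht : t ∈ P.runTiles c b) :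
    IsDyckTile t := by
  obtain ⟨a, e, k, he, -, hr, rfl⟩ := mem_runTiles.mp ht
  exact isDyckTile_runCells hr.le he (h.pt_eq_of_isMaxRun hr he)
    fun p hp hpe => (h.pt_ge_of_isMaxRun hr he hp hpe).1

theorem exists_run_mem_runTiles (h : P.IsTilingProfile c b) (hp : p ≤ 2 * n) (hk : k < c p) :
    ∃ a e, (a ≤ p ∧ p ≤ e) ∧ IsMaxRun b a e k ∧ P.runCells a e k ∈ P.runTiles c b := by
  obtain ⟨a, e, ⟨ha, he⟩, hr⟩ := exists_isMaxRun h.eq_zero p k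
  refine ⟨a, e, ⟨ha, he⟩, hr, mem_runTiles.mpr ⟨a, e, k, ?_, ?_, hr, rfl⟩⟩
  · by_contra! hlt
    have := hr.joined (e - 1) (by omega) (by omega)
    rw [h.eq_zero (e - 1) (by omega)] at this
    exact Nat.not_lt_zero _ this
  · rcases ha.eq_or_lt with rfl | ha
    · exact hk
    · exact (hr.joined a le_rfl (by omega)).trans_le (h.le_and_le_succ a).1

theorem biUnion_runTiles (h : P.IsTilingProfile c b) :
    (P.runTiles c b).biUnion id = skewCells P h.upper := by
  ext x
  simp only [mem_biUnion, id, mem_skewCells_iff h.ht_le_ht_upper]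
  constructor
  · rintro ⟨t, ht, hx⟩
    obtain ⟨a, e, k, he, hk, hr, rfl⟩ := mem_runTiles.mp ht
    obtain ⟨p, hp, rfl⟩ := mem_runCells.mp hx
    have hp2n := hp.2.trans he
    exact ⟨p, hp2n, k, h.halfGap_upper hp2n ▸ h.lt_of_isMaxRun hr hk hp.1 hp.2, rfl⟩
  · rintro ⟨p, hp, k, hk, rfl⟩
    obtain ⟨a, e, hpae, -, ht⟩ := h.exists_run_mem_runTiles hp (h.halfGap_upper hp ▸ hk)
    exact ⟨_, ht, cell_mem_runCells.mpr ⟨hpae, rfl⟩⟩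

/-- The tiling with prescribed column heights and join counts. -/
def tiling (h : P.IsTilingProfile c b) : DyckTiling n where
  lower := P
  upper := h.upper
  below := h.ht_le_ht_upper
  tiles := P.runTiles c b
  isDyck _ := h.isDyckTile_of_mem_runTiles
  disj _ ht _ hu := disjoint_of_mem_runTiles ht hu
  cover := h.biUnion_runTiles

theorem coverInclusive_tiling (h : P.IsTilingProfile c b) : h.tiling.CoverInclusive := by
  rintro t ht u hu ⟨x, hx, y, hy, hxy, hlt⟩ z hz
  obtain ⟨a, e, k, -, -, hr, rfl⟩ := mem_runTiles.mp ht
  obtain ⟨a', e', k', -, -, hr', rfl⟩ := mem_runTiles.mp hu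
  obtain ⟨p, hp, rfl⟩ := mem_runCells.mp hx
  obtain ⟨p', hp', rfl⟩ := mem_runCells.mp hy
  obtain ⟨q, hq, rfl⟩ := mem_runCells.mp hz
  simp only [cell] at hxy hlt
  obtain rfl : p = p' := by omega
  have := hr.subset hr' (by omega) hp hp'
  exact ⟨_, cell_mem_runCells.mpr ⟨by omega, rfl⟩⟩

theorem joined_tiling_iff (h : P.IsTilingProfile c b) :
    h.tiling.Joined p (p + 1) k ↔ k < b p := by
  constructor
  · rintro ⟨t, ht, hleft, hright⟩
    obtain ⟨a, e, j, -, -, hr, rfl⟩ := mem_runTiles.mp ht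
    obtain ⟨hp, rfl⟩ := cell_mem_runCells.mp hleft
    obtain ⟨hp', -⟩ := cell_mem_runCells.mp hright
    exact hr.joined p hp.1 hp'.2
  · intro hk
    have hp : p ≤ 2 * n := by
      by_contra! hp
      exact Nat.not_lt_zero _ (h.eq_zero p hp.le ▸ hk)
    obtain ⟨a, e, hpae, hr, ht⟩ :=
      h.exists_run_mem_runTiles hp (hk.trans_le (h.le_and_le_succ p).1)
    have hpe : p ≠ e := by
      rintro rfl
      exact hr.right.not_gt hk
    exact ⟨_, ht, cell_mem_runCells.mpr ⟨hpae, rfl⟩, cell_mem_runCells.mpr ⟨by omega, rfl⟩⟩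

theorem joinCount_tiling (h : P.IsTilingProfile c b) : h.tiling.joinCount p = b p :=
  eq_of_forall_lt_iff fun _ => by
    rw [DyckTiling.lt_joinCount_iff_of_downward, h.joined_tiling_iff]
    intro j k hk hj
    rw [h.joined_tiling_iff] at hk ⊢
    exact hj.trans hk

theorem colHeight_tiling (h : P.IsTilingProfile c b) (hp : p ≤ 2 * n) :
    h.tiling.colHeight p = c p :=
  h.halfGap_upper hp

end IsTilingProfile

end DyckPath

/-! ### Counting tilings -/

theorem eq_of_segList_eq {c b c' b' : ℕ → ℕ} {p len x : ℕ}
    (h : segList c b p len = segList c' b' p len) (hx : x < len) :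
    b (p + x) = b' (p + x) ∧ c (p + x + 1) = c' (p + x + 1) := by
  have := congrArg (fun L => L[x]?) h
  simpa [segList, List.getElem?_range' hx] using this

theorem coe_finsum_X_pow {R : Type*} [CommSemiring R] {ι : Sort*} (f : ι → ℕ) :
    ((∑ᶠ i, (Polynomial.X : Polynomial R) ^ f i : Polynomial R) : PowerSeries R) =
      ∑ᶠ i, (PowerSeries.X : PowerSeries R) ^ f i := by
  refine (AddMonoidHom.map_finsum_of_injective
    (Polynomial.coeToPowerSeries.ringHom (R := R) : Polynomial R →+ PowerSeries R)
    (Polynomial.coe_injective R) _).trans (finsum_congr fun i => ?_)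
  simp

namespace DyckTiling

variable {n : ℕ}

/-- The list of join counts and column heights encoding a cover-inclusive Dyck tiling. -/
def profile (T : DyckTiling n) : List (ℕ × ℕ) := segList T.colHeight T.joinCount 0 (2 * n)

theorem colHeight_zero (T : DyckTiling n) : T.colHeight 0 = 0 := DyckPath.halfGap_zero

theorem dis_eq_descentWt_profile (T : DyckTiling n) : T.dis = descentWt 0 T.profile := by
  have h := descentWt_segList T.colHeight T.joinCount 0 (2 * n)
  simp only [zero_add, T.colHeight_zero] at h
  exact T.dis_eq_sum.trans h.symm

theorem CoverInclusive.eq_of_profile_eq {T₁ T₂ : DyckTiling n} (h₁ : T₁.CoverInclusive)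
    (h₂ : T₂.CoverInclusive) (hlow : T₁.lower = T₂.lower) (h : T₁.profile = T₂.profile) :
    T₁ = T₂ := by
  refine h₁.eq_of_counts_eq h₂ hlow (fun p hp => ?_) fun p hp => ?_
  · cases p with
    | zero => rw [colHeight_zero, colHeight_zero]
    | succ p => simpa using (eq_of_segList_eq h (Nat.lt_of_succ_le hp)).2
  · simpa using (eq_of_segList_eq h hp).1

section

variable {t : PlaneForest} {P : DyckPath t.size}

theorem CoverInclusive.profile_mem_configs {T : DyckTiling t.size} (hT : T.CoverInclusive)
    (ht : t.IsContour 0 T.lower.pt) :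
    T.profile ∈ t.configs 0 0 ∧ endHt 0 T.profile = 0 := by
  have hmem := PlaneForest.segList_mem_configs_iff (c := T.colHeight) (b := T.joinCount) (f := 0) ht
  have hend := endHt_segList T.colHeight T.joinCount 0 (2 * t.size)
  rw [T.colHeight_zero, zero_add] at hmem hend
  exact ⟨hmem.mpr hT.isProfile, hend.trans DyckPath.halfGap_last⟩

theorem exists_profile_eq (ht : t.IsContour 0 P.pt) {L : List (ℕ × ℕ)}
    (hL : L ∈ t.configs 0 0) (hend : endHt 0 L = 0) :
    ∃ T : DyckTiling t.size, (T.CoverInclusive ∧ T.lower = P) ∧ T.profile = L := by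
  have hlen := PlaneForest.length_of_mem_configs hL
  obtain ⟨c, b, hc, hcb, hb⟩ := exists_segList_eq L
  rw [hlen] at hcb hb
  subst hcb
  have hmem := PlaneForest.segList_mem_configs_iff (c := c) (b := b) (f := 0) ht
  have hlast := endHt_segList c b 0 (2 * t.size)
  rw [hc, zero_add] at hmem hlast
  have h : P.IsTilingProfile c b := ⟨hmem.mp hL, hc, hlast.symm.trans hend, hb⟩
  refine ⟨h.tiling, ⟨h.coverInclusive_tiling, rfl⟩, List.map_congr_left fun x hx => ?_⟩
  have hx : x < 2 * t.size := by simpa using hx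
  rw [h.joinCount_tiling, h.colHeight_tiling hx]

theorem finsum_pow_dis (ht : t.IsContour 0 P.pt) {R : Type*} [CommRing R] (z : R) :
    ∑ᶠ T : {T : DyckTiling t.size // T.CoverInclusive ∧ T.lower = P}, z ^ T.1.dis =
      PowerSeries.constantCoeff (t.transfer z 1) := by
  classical
  let profile' (T : {T : DyckTiling t.size // T.CoverInclusive ∧ T.lower = P}) := T.1.profile
  have hinj : Function.Injective profile' := fun T₁ T₂ h =>
    Subtype.ext (T₁.2.1.eq_of_profile_eq T₂.2.1 (T₁.2.2.trans T₂.2.2.symm) h)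
  have hrange : Set.range profile' =
      ((t.configs 0 0).toFinset.filter fun L => endHt 0 L = 0 : Finset (List (ℕ × ℕ))) := by
    ext L
    simp only [Set.mem_range, Subtype.exists, coe_filter, List.mem_toFinset, Set.mem_ofPred_eq]
    constructor
    · rintro ⟨T, ⟨hT, rfl⟩, rfl⟩
      exact hT.profile_mem_configs ht
    · rintro ⟨hL, hend⟩
      obtain ⟨T, hT, rfl⟩ := exists_profile_eq ht hL hend
      exact ⟨T, hT, rfl⟩
  have hone : (1 : PowerSeries R) = PowerSeries.mk fun x => if x = 0 then 1 else 0 := by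
    ext x
    rw [PowerSeries.coeff_one, PowerSeries.coeff_mk]
  calc ∑ᶠ T, z ^ (T : {T : DyckTiling t.size // T.CoverInclusive ∧ T.lower = P}).1.dis
      = ∑ᶠ T, z ^ descentWt 0 (profile' T) := by simp only [dis_eq_descentWt_profile, profile']
    _ = ∑ L ∈ (t.configs 0 0).toFinset with endHt 0 L = 0, z ^ descentWt 0 L := by
      rw [← finsum_mem_coe_finset, ← hrange, finsum_mem_range hinj]
    _ = PlaneForest.configSum z t 0 0 fun i => if i = 0 then 1 else 0 := by
      rw [sum_filter, List.sum_toFinset _ (t.nodup_configs 0 0)]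
      simp only [PlaneForest.configSum, mul_ite, mul_one, mul_zero]
    _ = PowerSeries.constantCoeff (t.transfer z 1) := by
      rw [hone, ← PowerSeries.coeff_zero_eq_constantCoeff_apply]
      simpa only [zero_add] using
        PlaneForest.configSum_eq_coeff_transfer z t (fun i => if i = 0 then 1 else 0) 0 0

end

end DyckTiling

/-- For every Dyck path `λ` of order `n`,
`Σ_{T ∈ D(λ,*)} z^{dis(T)} = Σ_{σ ∈ 𝓛(P_λ)} z^{des(σ)}` in `ℤ[z]`. -/
theorem dyck_tilings_dis_eq_descents (n : ℕ) (lam : DyckPath n) :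
    ∑ᶠ T : {T : DyckTiling n // T.CoverInclusive ∧ T.lower = lam},
        (Polynomial.X : Polynomial ℤ) ^ T.1.dis =
      ∑ᶠ σ : {σ : Equiv.Perm (Fin n) // LinExt lam σ},
        (Polynomial.X : Polynomial ℤ) ^ permDes σ.1 := by
  obtain ⟨t, rfl, ht⟩ := lam.exists_isContour
  refine Polynomial.coe_injective ℤ ?_
  rw [coe_finsum_X_pow, coe_finsum_X_pow]
  calc ∑ᶠ T : {T : DyckTiling t.size // T.CoverInclusive ∧ T.lower = lam},
        (PowerSeries.X : PowerSeries ℤ) ^ T.1.dis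
      = PowerSeries.constantCoeff (t.transfer PowerSeries.X 1) := DyckTiling.finsum_pow_dis ht _
    _ = (1 - PowerSeries.X) ^ (t.size + 1) * PowerSeries.mk fun m => (t.orderPoly m : ℤ) :=
      t.constantCoeff_transfer_X_one
    _ = ∑ᶠ σ : {σ : Equiv.Perm (Fin t.size) // LinExt lam σ}, PowerSeries.X ^ permDes σ.1 :=
      ht.finsum_X_pow_permDes.symm

end
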